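/- arXiv:1503.00321 — 7 statements merged into one kernel-verified Lean document; each statement's English description precedes it below -/
import Mathlib

section
/- Let 0 < ε < 1/2 and let T be an ε-noisy boolean decision tree on n variables of depth at most k·n. Then there exists a randomized query algorithm A (formally, a probability distribution over deterministic boolean decision trees whose leaves are labeled by leaves of T) such that: (i) for every input x ∈ {0,1}^n, the distribution of the leaf of T that A reaches on x equals the distribution on leaves of the ε-noisy computation of T on x; and (ii) for every input x, with probability at least 1 - exp(-ε^(2k)·n/16), the computation of A on x queries at most n - ε^(2k)·n/4 distinct variables, i.e., leaves at least ε^(2k)·n/4 variables unread. -/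
/-- A boolean decision tree on `n` variables with leaves labeled by `L`:
internal nodes are labeled by a variable index and have two children
(child `0` and child `1`). -/
inductive NoisyTree (n : ℕ) (L : Type) : Type where
  | leaf : L → NoisyTree n L
  | node : Fin n → NoisyTree n L → NoisyTree n L → NoisyTree n L

namespace NoisyTree

/-- Depth of a tree: maximum length of a root-to-leaf path. -/
def depth {n : ℕ} {L : Type} : NoisyTree n L → ℕ
  | .leaf _ => 0
  | .node _ t0 t1 => max (depth t0) (depth t1) + 1

/-- The leaf(-label) distribution of the `ε`-noisy computation of the tree on
input `x`: at a node labeled `i`, move to the child indexed by `x i ⊕ η` where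
`η` is a fresh independent Bernoulli(`ε`) bit.  `leafDist ε t x l` is the
probability that the noisy computation reaches a leaf labeled `l`. -/
def leafDist {n : ℕ} {L : Type} [DecidableEq L] (ε : ℝ) :
    NoisyTree n L → (Fin n → Bool) → L → ℝ
  | .leaf l, _, l' => if l' = l then 1 else 0
  | .node i t0 t1, x, l' =>
      (if x i then ε else 1 - ε) * leafDist ε t0 x l' +
      (if x i then 1 - ε else ε) * leafDist ε t1 x l'

end NoisyTree

/-- A deterministic boolean decision tree on `n` variables with leaves labeled
by `L`: at a node labeled `i` the true value of `x i` is read and the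
computation branches on it. -/
inductive DetTree (n : ℕ) (L : Type) : Type where
  | leaf : L → DetTree n L
  | node : Fin n → DetTree n L → DetTree n L → DetTree n L

namespace DetTree

/-- The leaf label reached by the deterministic computation on input `x`. -/
def eval {n : ℕ} {L : Type} : DetTree n L → (Fin n → Bool) → L
  | .leaf l, _ => l
  | .node i t0 t1, x => if x i then eval t1 x else eval t0 x

/-- The set of distinct variables queried by the deterministic computation on
input `x`. -/
def queried {n : ℕ} {L : Type} : DetTree n L → (Fin n → Bool) → Finset (Fin n)
  | .leaf _, _ => ∅
  | .node i t0 t1, x => insert i (if x i then queried t1 x else queried t0 x)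

end DetTree

/-- Tangent-line (AM-GM) bound. -/
lemma sum_pow_ge {n : ℕ} (ε k : ℝ) (hε0 : 0 < ε) (hε1 : ε < 1 / 2) (q : Fin n → ℕ)
    (h : ((∑ i, q i : ℕ) : ℝ) ≤ k * n) : n * ε ^ k ≤ ∑ i, ε ^ (q i) := by
  have hlog : Real.log ε ≤ 0 := Real.log_nonpos hε0.le (by linarith)
  have hpos : 0 < ε ^ k := Real.rpow_pos_of_pos hε0 k
  have h1 : ∀ i, ε ^ k * (1 + ((q i : ℝ) - k) * Real.log ε) ≤ ε ^ (q i) := by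
    intro i
    have e : ε ^ (q i) = ε ^ k * Real.exp (((q i : ℝ) - k) * Real.log ε) := by
      rw [← Real.rpow_natCast, Real.rpow_def_of_pos hε0, Real.rpow_def_of_pos hε0, ← Real.exp_add]
      congr 1; ring
    rw [e]
    apply mul_le_mul_of_nonneg_left _ hpos.le
    have := Real.add_one_le_exp (((q i : ℝ) - k) * Real.log ε)
    linarith
  have h2 := Finset.sum_le_sum (fun i (_ : i ∈ Finset.univ) => h1 i)
  rw [← Finset.mul_sum, Finset.sum_add_distrib, ← Finset.sum_mul, Finset.sum_sub_distrib] at h2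
  simp only [Finset.sum_const, Finset.card_univ, Fintype.card_fin, nsmul_eq_mul, mul_one] at h2
  push_cast at h
  have h3 : 0 ≤ (∑ i, (q i : ℝ) - n * k) * Real.log ε :=
    mul_nonneg_of_nonpos_of_nonpos (by linarith) hlog
  nlinarith [mul_nonneg hpos.le h3]

/-- Product over the unread variables. -/
noncomputable def unreadProd {n : ℕ} (c ε : ℝ) (q : Fin n → ℕ) (Q : Finset (Fin n)) : ℝ :=
  ∏ i ∈ Qᶜ, (1 - c * ε ^ (q i))

lemma unreadProd_step {n : ℕ} (c ε : ℝ) (hc0 : 0 ≤ c) (hc1 : c ≤ 1) (hε0 : 0 < ε)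
    (hε1 : ε < 1 / 2) (q : Fin n → ℕ) (Q : Finset (Fin n)) (i : Fin n) :
    ε * unreadProd c ε q Q + (1 - 2 * ε) * unreadProd c ε q (insert i Q) ≤
      (1 - ε) * unreadProd c ε (Function.update q i (q i + 1)) Q := by
  have hf : ∀ m : ℕ, 0 ≤ 1 - c * ε ^ m := by
    intro m
    have h1 : ε ^ m ≤ 1 := pow_le_one₀ hε0.le (by linarith)
    have h2 : 0 ≤ ε ^ m := by positivity
    nlinarith
  by_cases hi : i ∈ Q
  · rw [Finset.insert_eq_of_mem hi]
    have : unreadProd c ε (Function.update q i (q i + 1)) Q = unreadProd c ε q Q := by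
      unfold unreadProd
      apply Finset.prod_congr rfl
      intro j hj
      have : j ≠ i := by
        rintro rfl
        exact (Finset.mem_compl.mp hj) hi
      rw [Function.update_of_ne this]
    rw [this]
    linarith
  · have hic : i ∈ Qᶜ := Finset.mem_compl.mpr hi
    have e : (insert i Q)ᶜ = Qᶜ.erase i := by
      ext j; simp
    have e1 : unreadProd c ε q Q = (1 - c * ε ^ (q i)) * unreadProd c ε q (insert i Q) := by
      unfold unreadProd
      rw [e, Finset.mul_prod_erase _ (fun j => 1 - c * ε ^ (q j)) hic]
    have e2 : unreadProd c ε (Function.update q i (q i + 1)) Q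
        = (1 - c * ε ^ (q i + 1)) * unreadProd c ε q (insert i Q) := by
      unfold unreadProd
      rw [e, ← Finset.mul_prod_erase _ _ hic, Function.update_self]
      congr 1
      apply Finset.prod_congr rfl
      intro j hj
      rw [Function.update_of_ne (Finset.ne_of_mem_erase hj)]
    have hR : 0 ≤ unreadProd c ε q (insert i Q) := Finset.prod_nonneg (fun j _ => hf _)
    rw [e1, e2]
    have h2 : 0 ≤ c * ε ^ (q i) := by positivity
    have key : ε * (1 - c * ε ^ (q i)) + (1 - 2 * ε) ≤ (1 - ε) * (1 - c * ε ^ (q i + 1)) := by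
      rw [pow_succ]
      nlinarith [mul_nonneg h2 (sq_nonneg ε)]
    have := mul_le_mul_of_nonneg_right key hR
    linarith

/-- Indicator of a leaf label. -/
noncomputable def leafInd {L : Type} [DecidableEq L] (l a : L) : ℝ := if a = l then 1 else 0

lemma sim_exists {n : ℕ} {L : Type} [DecidableEq L]
    (ε k c : ℝ) (hε0 : 0 < ε) (hε1 : ε < 1 / 2) (hc0 : 0 ≤ c) (hc1 : c ≤ 1)
    (T : NoisyTree n L) :
    ∃ (ι : Type) (_ : Fintype ι) (trees : ι → DetTree n L) (w : ι → ℝ),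
      (∀ j, 0 ≤ w j) ∧ (∑ j, w j = 1) ∧
      (∀ (x : Fin n → Bool) (l : L),
        ∑ j, w j * leafInd l ((trees j).eval x) = T.leafDist ε x l) ∧
      (∀ (x : Fin n → Bool) (q : Fin n → ℕ), ((∑ i, q i + T.depth : ℕ) : ℝ) ≤ k * n →
        ∑ j, w j * unreadProd c ε q ((trees j).queried x) ≤ Real.exp (-(c * (n * ε ^ k)))) := by
  induction T with
  | leaf l =>
    refine ⟨Unit, inferInstance, fun _ => .leaf l, fun _ => 1, by simp, by simp, ?_, ?_⟩
    · intro x l'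
      simp only [DetTree.eval, NoisyTree.leafDist, Finset.univ_unique,
        Finset.sum_singleton, one_mul]
      unfold leafInd
      by_cases h : l = l'
      · rw [if_pos h, if_pos h.symm]
      · rw [if_neg h, if_neg (fun h' => h h'.symm)]
    · intro x q hq
      simp only [NoisyTree.depth, add_zero] at hq
      have h := sum_pow_ge ε k hε0 hε1 q hq
      simp only [DetTree.queried, unreadProd, Finset.univ_unique, Finset.sum_singleton, one_mul,
        Finset.compl_empty]
      calc ∏ i, (1 - c * ε ^ q i) ≤ ∏ i, Real.exp (-(c * ε ^ q i)) := by
            apply Finset.prod_le_prod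
            · intro i _
              have h1 : ε ^ q i ≤ 1 := pow_le_one₀ hε0.le (by linarith)
              have h2 : 0 ≤ ε ^ q i := by positivity
              nlinarith
            · intro i _
              have := Real.add_one_le_exp (-(c * ε ^ q i))
              linarith
        _ = Real.exp (-(c * ∑ i, ε ^ q i)) := by
            rw [← Real.exp_sum, Finset.sum_neg_distrib, Finset.mul_sum]
        _ ≤ _ := by
            apply Real.exp_le_exp.mpr
            have := mul_le_mul_of_nonneg_left h hc0
            linarith
  | node i t0 t1 ih0 ih1 =>
    obtain ⟨ι0, _, tr0, w0, hw0, hs0, he0, hp0⟩ := ih0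
    obtain ⟨ι1, _, tr1, w1, hw1, hs1, he1, hp1⟩ := ih1
    have hS0 : ∀ f : ι0 → ℝ, ∑ p : ι0 × ι1, (1 - 2 * ε) * (w0 p.1 * w1 p.2) * f p.1
        = (1 - 2 * ε) * ∑ j, w0 j * f j := by
      intro f
      rw [Fintype.sum_prod_type, Finset.mul_sum]
      apply Finset.sum_congr rfl
      intro a _
      calc _ = ∑ b, w1 b * ((1 - 2 * ε) * (w0 a * f a)) :=
            Finset.sum_congr rfl (fun b _ => by ring)
        _ = _ := by rw [← Finset.sum_mul, hs1, one_mul]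
    have hS1 : ∀ f : ι1 → ℝ, ∑ p : ι0 × ι1, (1 - 2 * ε) * (w0 p.1 * w1 p.2) * f p.2
        = (1 - 2 * ε) * ∑ j, w1 j * f j := by
      intro f
      rw [Fintype.sum_prod_type_right, Finset.mul_sum]
      apply Finset.sum_congr rfl
      intro a _
      calc _ = ∑ b, w0 b * ((1 - 2 * ε) * (w1 a * f a)) :=
            Finset.sum_congr rfl (fun b _ => by ring)
        _ = _ := by rw [← Finset.sum_mul, hs0, one_mul]
    have hA : ∀ {κ : Type} [Fintype κ] (w f : κ → ℝ), ∑ j, ε * w j * f j = ε * ∑ j, w j * f j := by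
      intro κ _ w f
      rw [Finset.mul_sum]
      exact Finset.sum_congr rfl (fun _ _ => by ring)
    have hStep : ∀ {κ : Type} [Fintype κ] (w : κ → ℝ) (Q : κ → Finset (Fin n)) (q : Fin n → ℕ)
        (_ : ∀ j, 0 ≤ w j),
        ε * ∑ j, w j * unreadProd c ε q (Q j)
          + (1 - 2 * ε) * ∑ j, w j * unreadProd c ε q (insert i (Q j))
        ≤ (1 - ε) * ∑ j, w j * unreadProd c ε (Function.update q i (q i + 1)) (Q j) := by
      intro κ _ w Q q hw
      rw [Finset.mul_sum, Finset.mul_sum, Finset.mul_sum, ← Finset.sum_add_distrib]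
      apply Finset.sum_le_sum
      intro j _
      have := mul_le_mul_of_nonneg_left
        (unreadProd_step c ε hc0 hc1 hε0 hε1 q (Q j) i) (hw j)
      linarith
    refine ⟨ι0 ⊕ ι1 ⊕ (ι0 × ι1), inferInstance,
      Sum.elim tr0 (Sum.elim tr1 (fun p => .node i (tr0 p.1) (tr1 p.2))),
      Sum.elim (fun j => ε * w0 j) (Sum.elim (fun j => ε * w1 j)
        (fun p => (1 - 2 * ε) * (w0 p.1 * w1 p.2))), ?_, ?_, ?_, ?_⟩
    · rintro (j | j | p)
      · exact mul_nonneg hε0.le (hw0 j)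
      · exact mul_nonneg hε0.le (hw1 j)
      · exact mul_nonneg (by linarith) (mul_nonneg (hw0 _) (hw1 _))
    · simp only [Fintype.sum_sum_type, Sum.elim_inl, Sum.elim_inr]
      have a0 := hA w0 (fun _ => 1)
      have a1 := hA w1 (fun _ => 1)
      have a2 := hS0 (fun _ => 1)
      simp only [mul_one, hs0, hs1] at a0 a1 a2
      rw [a0, a1, a2]; ring
    · intro x l
      simp only [Fintype.sum_sum_type, Sum.elim_inl, Sum.elim_inr, DetTree.eval,
        NoisyTree.leafDist]
      rw [hA, hA, he0, he1]
      cases hx : x i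
      · simp only [Bool.false_eq_true, if_false]
        rw [hS0 (fun j => leafInd l ((tr0 j).eval x)), he0]; ring
      · simp only [if_true]
        rw [hS1 (fun j => leafInd l ((tr1 j).eval x)), he1]; ring
    · intro x q hq
      simp only [NoisyTree.depth] at hq
      have hu : ∑ j, Function.update q i (q i + 1) j = ∑ j, q j + 1 := by
        rw [Finset.sum_update_of_mem (Finset.mem_univ i),
          ← Finset.add_sum_erase _ q (Finset.mem_univ i), Finset.sdiff_singleton_eq_erase]
        ring
      have hle : ∀ a b : ℕ, a ≤ b → (b : ℝ) ≤ k * n → (a : ℝ) ≤ k * n := fun a b h h' =>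
        le_trans (by exact_mod_cast h) h'
      have b0 := hp0 x q (hle _ _ (by omega) hq)
      have b1 := hp1 x q (hle _ _ (by omega) hq)
      have c0 := hp0 x (Function.update q i (q i + 1)) (hle _ _ (by rw [hu]; omega) hq)
      have c1 := hp1 x (Function.update q i (q i + 1)) (hle _ _ (by rw [hu]; omega) hq)
      simp only [Fintype.sum_sum_type, Sum.elim_inl, Sum.elim_inr, DetTree.queried]
      rw [hA, hA]
      cases hx : x i
      · simp only [Bool.false_eq_true, if_false]
        rw [hS0 (fun j => unreadProd c ε q (insert i ((tr0 j).queried x)))]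
        have s := hStep w0 (fun j => (tr0 j).queried x) q hw0
        have m1 := mul_le_mul_of_nonneg_left b1 hε0.le
        have m2 := mul_le_mul_of_nonneg_left c0 (by linarith : (0 : ℝ) ≤ 1 - ε)
        linarith
      · simp only [if_true]
        rw [hS1 (fun j => unreadProd c ε q (insert i ((tr1 j).queried x)))]
        have s := hStep w1 (fun j => (tr1 j).queried x) q hw1
        have m1 := mul_le_mul_of_nonneg_left b0 hε0.le
        have m2 := mul_le_mul_of_nonneg_left c1 (by linarith : (0 : ℝ) ≤ 1 - ε)
        linarith

/-- Simulation of an `ε`-noisy decision tree of depth at most `k·n` by a randomized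
query algorithm (a finitely supported distribution `(w, trees)` over deterministic
decision trees whose leaves are labeled by leaves of `T`):
(i) for every input `x`, the distribution of the leaf of `T` reached equals the leaf
distribution of the `ε`-noisy computation of `T` on `x`; and
(ii) for every input `x`, with probability at least `1 - exp(-ε^(2k) n / 16)` the
computation queries at most `n - ε^(2k) n / 4` distinct variables, i.e. leaves at
least `ε^(2k) n / 4` variables unread. -/
theorem noisy_tree_to_sampling {n : ℕ} {L : Type} [DecidableEq L]
    (ε k : ℝ) (hε0 : 0 < ε) (hε1 : ε < 1 / 2) (hk : 0 ≤ k)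
    (T : NoisyTree n L) (hdepth : (T.depth : ℝ) ≤ k * n) :
    ∃ (m : ℕ) (trees : Fin m → DetTree n L) (w : Fin m → ℝ),
      (∀ j, 0 ≤ w j) ∧ (∑ j, w j = 1) ∧
      (∀ (x : Fin n → Bool) (l : L),
        ∑ j, w j * (if (trees j).eval x = l then (1 : ℝ) else 0) = T.leafDist ε x l) ∧
      (∀ x : Fin n → Bool,
        1 - Real.exp (-(ε ^ (2 * k) * n / 16)) ≤
          ∑ j ∈ Finset.univ.filter
              (fun j => (((trees j).queried x).card : ℝ) ≤ n - ε ^ (2 * k) * n / 4),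
            w j) := by
  have he : Real.exp (-1) ≤ 1 / 2 := by
    rw [Real.exp_neg, one_div]
    apply inv_anti₀ (by norm_num)
    have := Real.add_one_le_exp (1 : ℝ)
    linarith
  have hepos := Real.exp_pos (-1)
  obtain ⟨ι, _, tr, w, hw, hs, hev, hp⟩ := sim_exists ε k (1 - Real.exp (-1)) hε0 hε1
    (by linarith) (by linarith) T
  let e := (Fintype.equivFin ι).symm
  refine ⟨Fintype.card ι, fun j => tr (e j), fun j => w (e j), fun j => hw _, ?_, ?_, ?_⟩
  · rw [← hs]; exact Equiv.sum_comp e w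
  · intro x l
    rw [← hev]
    exact Equiv.sum_comp e (fun j => w j * (if (tr j).eval x = l then (1 : ℝ) else 0))
  · intro x
    have hp' := hp x (fun _ => 0) (by simpa using hdepth)
    rw [← Equiv.sum_comp e] at hp'
    rw [← Equiv.sum_comp e] at hs
    have hprod : ∀ Q : Finset (Fin n), unreadProd (1 - Real.exp (-1)) ε (fun _ => 0) Q
        = Real.exp (-((n : ℝ) - Q.card)) := by
      intro Q
      have h1 : ((Qᶜ.card : ℕ) : ℝ) = (n : ℝ) - Q.card := by
        rw [Finset.card_compl, Fintype.card_fin, Nat.cast_sub]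
        simpa using Finset.card_le_univ Q
      simp only [unreadProd, pow_zero, mul_one, sub_sub_cancel, Finset.prod_const]
      rw [← Real.exp_nat_mul, h1]
      congr 1; ring
    simp only [hprod] at hp'
    set P : Fin (Fintype.card ι) → Prop :=
      fun j => (((tr (e j)).queried x).card : ℝ) ≤ n - ε ^ (2 * k) * n / 4 with hP
    have hsplit := Finset.sum_filter_add_sum_filter_not Finset.univ P (fun j => w (e j))
    rw [hs] at hsplit
    have hbad : (∑ j ∈ Finset.univ.filter (fun j => ¬ P j), w (e j))
        * Real.exp (-(ε ^ (2 * k) * n / 4))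
        ≤ Real.exp (-((1 - Real.exp (-1)) * (n * ε ^ k))) := by
      refine le_trans ?_ hp'
      rw [Finset.sum_mul]
      refine le_trans (Finset.sum_le_sum (g := fun j => w (e j) *
        Real.exp (-((n : ℝ) - ((tr (e j)).queried x).card))) ?_) ?_
      · intro j hj
        have hj' := (Finset.mem_filter.mp hj).2
        simp only [hP, not_le] at hj'
        apply mul_le_mul_of_nonneg_left _ (hw _)
        apply Real.exp_le_exp.mpr
        linarith
      · apply Finset.sum_le_sum_of_subset_of_nonneg (Finset.filter_subset _ _)
        intro j _ _
        exact mul_nonneg (hw _) (Real.exp_pos _).le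
    have hpow : ε ^ (2 * k) ≤ ε ^ k :=
      Real.rpow_le_rpow_of_exponent_ge hε0 (by linarith) (by linarith)
    have hbad2 : (∑ j ∈ Finset.univ.filter (fun j => ¬ P j), w (e j))
        ≤ Real.exp (-(ε ^ (2 * k) * n / 16)) := by
      have h0 := Real.exp_pos (-(ε ^ (2 * k) * n / 4))
      refine le_of_mul_le_mul_right (le_trans hbad ?_) h0
      rw [← Real.exp_add]
      apply Real.exp_le_exp.mpr
      have hn : (0 : ℝ) ≤ n := Nat.cast_nonneg n
      have h1 : ε ^ (2 * k) * n ≤ n * ε ^ k := by nlinarith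
      have h2 : 0 ≤ n * ε ^ k := mul_nonneg hn (Real.rpow_pos_of_pos hε0 k).le
      nlinarith
    linarith
end

section
/- Let 0 < ε < 1/2, let r ≥ 1 and n ≥ 64r, and let T be an ε-noisy boolean decision tree on n variables of depth at most (n/2) · log₂(n/(64r)) / log₂(1/ε). Then there exists a randomized query algorithm A (a distribution over deterministic boolean decision trees whose leaves are labeled by leaves of T) such that for every input x ∈ {0,1}^n, the distribution of the leaf of T reached by A on x equals the leaf distribution of the ε-noisy computation of T on x, and with probability at least 1 - e^(-4) ≥ 7/8 the computation of A on x leaves at least r variables unread. -/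
namespace NoisyTree

/-- Expectation of `F` over the random deterministic tree simulating `T`. -/
noncomputable def simE {n : ℕ} {L : Type} (ε : ℝ) :
    NoisyTree n L → (DetTree n L → ℝ) → ℝ
  | .leaf l, F => F (.leaf l)
  | .node i t0 t1, F =>
      (1 - 2 * ε) * simE ε t0 (fun D0 => simE ε t1 (fun D1 => F (.node i D0 D1))) +
      ε * simE ε t0 F + ε * simE ε t1 F

theorem simE_const {n : ℕ} {L : Type} (ε c : ℝ) (T : NoisyTree n L) :
    simE ε T (fun _ => c) = c := by
  induction T with
  | leaf l => rfl
  | node i t0 t1 h0 h1 => simp only [simE, h0, h1]; ring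

theorem simE_node {n : ℕ} {L : Type} (ε : ℝ) (i : Fin n) (t0 t1 : NoisyTree n L)
    (b : Bool) (F H : DetTree n L → ℝ)
    (hF : ∀ D0 D1, F (.node i D0 D1) = if b then H D1 else H D0) :
    simE ε (.node i t0 t1) F =
      (1 - 2 * ε) * (if b then simE ε t1 H else simE ε t0 H) +
      ε * simE ε t0 F + ε * simE ε t1 F := by
  cases b <;> simp [simE, hF, simE_const]

theorem simE_rep {n : ℕ} {L : Type} (ε : ℝ) (hε0 : 0 < ε) (hε1 : ε < 1 / 2)
    (T : NoisyTree n L) :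
    ∃ (m : ℕ) (trees : Fin m → DetTree n L) (w : Fin m → ℝ),
      (∀ j, 0 ≤ w j) ∧ ∀ F, simE ε T F = ∑ j, w j * F (trees j) := by
  suffices h : ∃ (ι : Type) (_ : Fintype ι) (trees : ι → DetTree n L) (w : ι → ℝ),
      (∀ j, 0 ≤ w j) ∧ ∀ F, simE ε T F = ∑ j, w j * F (trees j) by
    obtain ⟨ι, _, trees, w, hw, hF⟩ := h
    let e := Fintype.equivFin ι
    refine ⟨Fintype.card ι, trees ∘ e.symm, w ∘ e.symm, fun j => hw _, fun F => ?_⟩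
    rw [hF]
    exact (Equiv.sum_comp e.symm (fun j => w j * F (trees j))).symm
  induction T with
  | leaf l => exact ⟨Unit, inferInstance, fun _ => .leaf l, fun _ => 1, by simp, by simp [simE]⟩
  | node i t0 t1 h0 h1 =>
    obtain ⟨ι0, _, d0, w0, hw0, hF0⟩ := h0
    obtain ⟨ι1, _, d1, w1, hw1, hF1⟩ := h1
    refine ⟨(ι0 × ι1) ⊕ (ι0 ⊕ ι1), inferInstance,
      Sum.elim (fun j => .node i (d0 j.1) (d1 j.2)) (Sum.elim d0 d1),
      Sum.elim (fun j => (1 - 2 * ε) * (w0 j.1 * w1 j.2))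
        (Sum.elim (fun j => ε * w0 j) (fun j => ε * w1 j)), ?_, ?_⟩
    · rintro (j | j | j)
      · exact mul_nonneg (by linarith) (mul_nonneg (hw0 _) (hw1 _))
      · exact mul_nonneg hε0.le (hw0 _)
      · exact mul_nonneg hε0.le (hw1 _)
    · intro F
      simp only [simE, hF0, hF1, Fintype.sum_sum_type, Sum.elim_inl, Sum.elim_inr,
        Fintype.sum_prod_type, Finset.mul_sum, mul_assoc, add_assoc]

theorem simE_eval {n : ℕ} {L : Type} [DecidableEq L] (ε : ℝ) (x : Fin n → Bool) (l : L)
    (T : NoisyTree n L) :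
    simE ε T (fun D => if D.eval x = l then 1 else 0) = T.leafDist ε x l := by
  induction T with
  | leaf l' => simp [simE, leafDist, DetTree.eval, eq_comm]
  | node i t0 t1 h0 h1 =>
    rw [simE_node ε i t0 t1 (x i) _ (fun D => if D.eval x = l then 1 else 0), h0, h1]
    · cases h : x i <;> simp [leafDist, h] <;> ring
    · intro D0 D1
      cases h : x i <;> simp [DetTree.eval, h]

/-- The potential function. -/
noncomputable def pot {n : ℕ} {L : Type} (x : Fin n → Bool) (p : Fin n → ℝ)
    (D : DetTree n L) : ℝ :=
  ∏ k, (if k ∈ D.queried x then 1 else 1 - p k / 2)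

theorem pot_update {n : ℕ} {L : Type} (x : Fin n → Bool) (p : Fin n → ℝ)
    (D : DetTree n L) (i : Fin n) (c : ℝ) :
    pot x (Function.update p i c) D = (if i ∈ D.queried x then 1 else 1 - c / 2) *
      ∏ k ∈ Finset.univ.erase i, (if k ∈ D.queried x then 1 else 1 - p k / 2) := by
  unfold pot
  rw [← Finset.mul_prod_erase Finset.univ _ (Finset.mem_univ i)]
  congr 1
  · simp
  · refine Finset.prod_congr rfl fun k hk => ?_
    rw [Function.update_of_ne (Finset.ne_of_mem_erase hk)]

theorem pot_node {n : ℕ} {L : Type} (x : Fin n → Bool) (p : Fin n → ℝ)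
    (D0 D1 : DetTree n L) (i : Fin n) :
    pot x p (.node i D0 D1) = if x i then pot x (Function.update p i 0) D1 else
      pot x (Function.update p i 0) D0 := by
  have key : ∀ D : DetTree n L, pot x (Function.update p i 0) D =
      ∏ k, (if k ∈ insert i (D.queried x) then 1 else 1 - p k / 2) := by
    intro D
    refine Finset.prod_congr rfl fun k _ => ?_
    by_cases hk : k = i
    · subst hk; simp
    · simp [hk]
  rw [key, key]
  cases h : x i <;> simp [pot, DetTree.queried, h]

theorem simE_mix {n : ℕ} {L : Type} (ε : ℝ) (hε0 : 0 < ε) (hε1 : ε < 1 / 2)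
    (x : Fin n → Bool) (p : Fin n → ℝ) (i : Fin n) (t : NoisyTree n L) :
    (1 - 2 * ε) * simE ε t (pot x (Function.update p i 0)) + ε * simE ε t (pot x p) =
      (1 - ε) * simE ε t (pot x (Function.update p i (p i * (ε / (1 - ε))))) := by
  obtain ⟨m, d, w, -, h⟩ := simE_rep ε hε0 hε1 t
  have h1 : (1 - ε) ≠ 0 := by linarith
  simp only [h, Finset.mul_sum, ← Finset.sum_add_distrib]
  refine Finset.sum_congr rfl fun j _ => ?_
  have hp : pot x p (d j) = pot x (Function.update p i (p i)) (d j) := by simp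
  rw [hp]
  simp only [pot_update]
  split_ifs
  · ring
  · field_simp
    ring

theorem simE_bound {n : ℕ} {L : Type} (ε : ℝ) (hε0 : 0 < ε) (hε1 : ε < 1 / 2) (hn : 0 < n)
    (x : Fin n → Bool) (T : NoisyTree n L) :
    ∀ p : Fin n → ℝ, (∀ k, 0 < p k) → (∀ k, p k ≤ 1) →
      simE ε T (pot x p) ≤
        Real.exp (-(n / 2 * ((∏ k, p k) * ε ^ T.depth) ^ (1 / n : ℝ))) := by
  have hn' : (0 : ℝ) < n := by exact_mod_cast hn
  induction T with
  | leaf l =>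
    intro p hp hp1
    have amgm := Real.geom_mean_le_arith_mean_weighted Finset.univ (fun _ : Fin n => (1 / n : ℝ)) p
      (fun _ _ => by positivity) (by simp; field_simp) (fun k _ => (hp k).le)
    rw [Real.finsetProd_rpow _ _ (fun k _ => (hp k).le), ← Finset.mul_sum] at amgm
    have hle : n / 2 * (∏ k, p k) ^ (1 / n : ℝ) ≤ ∑ k, p k / 2 := by
      rw [← Finset.sum_div]
      calc n / 2 * (∏ k, p k) ^ (1 / n : ℝ) ≤ n / 2 * (1 / n * ∑ k, p k) := by gcongr
        _ = _ := by field_simp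
    simp only [simE, depth, pow_zero, mul_one]
    have hpot : pot x p (DetTree.leaf l) = ∏ k, (1 - p k / 2) := by
      simp [pot, DetTree.queried]
    rw [hpot]
    refine le_trans ?_ (Real.exp_le_exp.2 (neg_le_neg hle))
    rw [← Finset.sum_neg_distrib, Real.exp_sum]
    refine Finset.prod_le_prod (fun k _ => by linarith [hp1 k]) fun k _ => ?_
    linarith [Real.add_one_le_exp (-(p k / 2))]
  | node i t0 t1 h0 h1 =>
    intro p hp hp1
    have e1 : (1 - ε) ≠ 0 := by linarith
    have hq : 0 < ε / (1 - ε) := div_pos hε0 (by linarith)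
    have hq' : ε ≤ ε / (1 - ε) := by
      rw [le_div_iff₀ (by linarith)]; nlinarith
    set p' := Function.update p i (p i * (ε / (1 - ε))) with hp'def
    have hp' : ∀ k, 0 < p' k := by
      intro k
      by_cases hk : k = i
      · subst hk; simpa [p'] using mul_pos (hp k) hq
      · simpa [p', hk] using hp k
    have hq1 : ε / (1 - ε) ≤ 1 := by
      rw [div_le_one (by linarith)]; linarith
    have hp1' : ∀ k, p' k ≤ 1 := by
      intro k
      by_cases hk : k = i
      · subst hk
        simpa [p'] using mul_le_one₀ (hp1 k) hq.le hq1
      · simpa [p', hk] using hp1 k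
    have hP : 0 < ∏ k, p k := Finset.prod_pos fun k _ => hp k
    have hprod : ∏ k, p' k = (∏ k, p k) * (ε / (1 - ε)) := by
      rw [hp'def, Finset.prod_update_of_mem (Finset.mem_univ i),
        ← Finset.mul_prod_erase Finset.univ p (Finset.mem_univ i), Finset.sdiff_singleton_eq_erase]
      ring
    set D := (NoisyTree.node i t0 t1).depth with hD
    set B := Real.exp (-(n / 2 * ((∏ k, p k) * ε ^ D) ^ (1 / n : ℝ))) with hB
    have mono : ∀ a b : ℝ, 0 ≤ a → a ≤ b →
        Real.exp (-(n / 2 * ((∏ k, p k) * b) ^ (1 / n : ℝ))) ≤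
          Real.exp (-(n / 2 * ((∏ k, p k) * a) ^ (1 / n : ℝ))) := by
      intro a b ha hab
      gcongr
    have step : ∀ t : NoisyTree n L, t.depth + 1 ≤ D →
        (∀ p : Fin n → ℝ, (∀ k, 0 < p k) → (∀ k, p k ≤ 1) → simE ε t (pot x p) ≤
          Real.exp (-(n / 2 * ((∏ k, p k) * ε ^ t.depth) ^ (1 / n : ℝ)))) →
        simE ε t (pot x p) ≤ B ∧ simE ε t (pot x p') ≤ B := by
      intro t ht ih
      have e3 : ε ^ D ≤ ε ^ (t.depth + 1) :=
        pow_le_pow_of_le_one hε0.le (by linarith) ht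
      have e4 : ε ^ (t.depth + 1) ≤ ε ^ t.depth :=
        pow_le_pow_of_le_one hε0.le (by linarith) (by omega)
      have e5 : 0 < ε ^ t.depth := pow_pos hε0 _
      constructor
      · refine (ih p hp hp1).trans ?_
        rw [hB]
        exact mono _ _ (pow_pos hε0 _).le (e3.trans e4)
      · refine (ih p' hp' hp1').trans ?_
        rw [hB, hprod, mul_assoc]
        refine mono _ _ (pow_pos hε0 _).le (e3.trans ?_)
        rw [pow_succ, mul_comm]
        gcongr
    have s0 := step t0 (by simp [hD, depth]) h0
    have s1 := step t1 (by simp [hD, depth]) h1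
    rw [simE_node ε i t0 t1 (x i) _ (pot x (Function.update p i 0))
      (fun D0 D1 => pot_node x p D0 D1 i)]
    have m0 := simE_mix ε hε0 hε1 x p i t0
    have m1 := simE_mix ε hε0 hε1 x p i t1
    rw [← hp'def] at m0 m1
    have a0 := mul_le_mul_of_nonneg_left s0.1 hε0.le
    have a1 := mul_le_mul_of_nonneg_left s1.1 hε0.le
    have b0 := mul_le_mul_of_nonneg_left s0.2 (by linarith : 0 ≤ 1 - ε)
    have b1 := mul_le_mul_of_nonneg_left s1.2 (by linarith : 0 ≤ 1 - ε)
    cases x i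
    · simp only [Bool.false_eq_true, if_false]; linarith
    · simp only [if_true]; linarith

theorem depth_bound {n r : ℕ} (ε : ℝ) (hε0 : 0 < ε) (hε1 : ε < 1 / 2) (hr : 1 ≤ r)
    (hn : 64 * r ≤ n) (d : ℕ)
    (hdepth : (d : ℝ) ≤
      ((n : ℝ) / 2) * Real.logb 2 ((n : ℝ) / (64 * r)) / Real.logb 2 (1 / ε)) :
    (64 * r : ℝ) ≤ n * (ε ^ d) ^ (1 / n : ℝ) := by
  have hr' : (1 : ℝ) ≤ r := by exact_mod_cast hr
  have hn' : (64 * r : ℝ) ≤ n := by exact_mod_cast hn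
  have hn0 : (0 : ℝ) < n := by linarith
  have hle : 0 < Real.log (1 / ε) :=
    Real.log_pos (by rw [lt_div_iff₀ hε0]; linarith)
  have hl2 : 0 < Real.log 2 := Real.log_pos (by norm_num)
  have h1 : (d : ℝ) * Real.log (1 / ε) ≤ n / 2 * Real.log (n / (64 * r)) := by
    rw [← le_div_iff₀ hle]
    refine hdepth.trans (le_of_eq ?_)
    unfold Real.logb
    field_simp
  have hq : 0 ≤ Real.log (n / (64 * r)) :=
    Real.log_nonneg (by rw [le_div_iff₀ (by linarith)]; linarith)
  rw [← Real.log_le_log_iff (by linarith) (by positivity),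
    Real.log_mul hn0.ne' (by positivity), Real.log_rpow (by positivity), Real.log_pow]
  rw [one_div, Real.log_inv] at h1
  have h3 : Real.log (n / (64 * r)) = Real.log n - Real.log (64 * r) :=
    Real.log_div hn0.ne' (by positivity)
  have h4 : -(1 / n * (d * Real.log ε)) ≤ Real.log (n / (64 * r)) := by
    rw [show -(1 / n * (d * Real.log ε)) = (d * -Real.log ε) / n by ring, div_le_iff₀ hn0]
    nlinarith [mul_nonneg hn0.le hq]
  linarith

end NoisyTree

open NoisyTree

/-- Simulation of an `ε`-noisy decision tree of depth at most
`(n/2) · log₂(n/(64r)) / log₂(1/ε)` (where `1 ≤ r` and `n ≥ 64r`) by a randomized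
query algorithm (a finitely supported distribution `(w, trees)` over deterministic
decision trees whose leaves are labeled by leaves of `T`): the leaf distribution of
the `ε`-noisy computation of `T` is reproduced on every input, and on every input,
with probability at least `1 - e^(-4) ≥ 7/8`, at least `r` variables are left
unread. -/
theorem noisy_tree_to_sampling_r_unread {n r : ℕ} {L : Type} [DecidableEq L]
    (ε : ℝ) (hε0 : 0 < ε) (hε1 : ε < 1 / 2) (hr : 1 ≤ r) (hn : 64 * r ≤ n)
    (T : NoisyTree n L)
    (hdepth : (T.depth : ℝ) ≤
      ((n : ℝ) / 2) * Real.logb 2 ((n : ℝ) / (64 * r)) / Real.logb 2 (1 / ε)) :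
    ∃ (m : ℕ) (trees : Fin m → DetTree n L) (w : Fin m → ℝ),
      (∀ j, 0 ≤ w j) ∧ (∑ j, w j = 1) ∧
      (∀ (x : Fin n → Bool) (l : L),
        ∑ j, w j * (if (trees j).eval x = l then (1 : ℝ) else 0) = T.leafDist ε x l) ∧
      (∀ x : Fin n → Bool,
        1 - Real.exp (-4) ≤
          ∑ j ∈ Finset.univ.filter
              (fun j => r ≤ n - ((trees j).queried x).card), w j) ∧
      (7 / 8 : ℝ) ≤ 1 - Real.exp (-4) := by
  obtain ⟨m, d, w, hw, hF⟩ := simE_rep ε hε0 hε1 T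
  have hsum : ∑ j, w j = 1 := by
    have := hF (fun _ => 1)
    rw [simE_const] at this
    simpa using this.symm
  have he : Real.exp (-4) ≤ 1 / 8 := by
    have h2 : (2 : ℝ) ≤ Real.exp 1 := by linarith [Real.add_one_le_exp 1]
    have h16 : (2 : ℝ) ^ 4 ≤ Real.exp 1 ^ 4 := by gcongr
    rw [← Real.exp_nat_mul] at h16
    norm_num at h16
    rw [Real.exp_neg, ← one_div]
    exact one_div_le_one_div_of_le (by norm_num) (by linarith)
  refine ⟨m, d, w, hw, hsum, fun x l => ?_, fun x => ?_, by linarith⟩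
  · rw [← simE_eval, hF]
  · have hb := simE_bound ε hε0 hε1 (by omega) x T (fun _ => 1) (fun _ => one_pos) (fun _ => le_rfl)
    have hd := depth_bound ε hε0 hε1 hr hn T.depth hdepth
    simp only [Finset.prod_const_one, one_mul] at hb
    have hb2 : simE ε T (pot x (fun _ => 1)) ≤ Real.exp (-(32 * r)) :=
      hb.trans (Real.exp_le_exp.2 (by linarith))
    rw [hF] at hb2
    have hpot : ∀ D : DetTree n L, pot x (fun _ => 1) D =
        (1 / 2 : ℝ) ^ (n - (D.queried x).card) := by
      intro D
      unfold pot
      rw [Finset.prod_ite]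
      simp only [Finset.prod_const_one, one_mul, Finset.prod_const]
      congr 1
      · norm_num
      · rw [← Finset.compl_filter, Finset.card_compl]; simp
    rw [← Finset.sum_filter_add_sum_filter_not Finset.univ
      (fun j => r ≤ n - ((d j).queried x).card) w] at hsum
    have hbad : (1 / 2 : ℝ) ^ r * ∑ j ∈ Finset.univ.filter
        (fun j => ¬ r ≤ n - ((d j).queried x).card), w j ≤ Real.exp (-(32 * r)) := by
      refine le_trans ?_ hb2
      rw [Finset.mul_sum]
      refine le_trans (Finset.sum_le_sum (g := fun j => w j * pot x (fun _ => 1) (d j)) ?_)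
        (Finset.sum_le_sum_of_subset_of_nonneg (Finset.filter_subset _ _) ?_)
      · intro j hj
        simp only [Finset.mem_filter, Finset.mem_univ, true_and, not_le] at hj
        rw [hpot, mul_comm]
        exact mul_le_mul_of_nonneg_left
          (pow_le_pow_of_le_one (by norm_num) (by norm_num) hj.le) (hw j)
      · intro j _ _
        rw [hpot]
        exact mul_nonneg (hw j) (by positivity)
    have h2 : Real.exp (-(r : ℝ)) ≤ (1 / 2 : ℝ) ^ r := by
      rw [show (-(r : ℝ)) = r * (-1) by ring, Real.exp_nat_mul]
      gcongr
      rw [Real.exp_neg, one_div]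
      gcongr
      linarith [Real.add_one_le_exp 1]
    have hnn : 0 ≤ ∑ j ∈ Finset.univ.filter
        (fun j => ¬ r ≤ n - ((d j).queried x).card), w j :=
      Finset.sum_nonneg fun j _ => hw j
    have h3 := (mul_le_mul_of_nonneg_right h2 hnn).trans hbad
    have hr' : (1 : ℝ) ≤ r := by exact_mod_cast hr
    have h4 : Real.exp (-(32 * r)) ≤ Real.exp (-(r : ℝ)) * Real.exp (-4) := by
      rw [← Real.exp_add]
      exact Real.exp_le_exp.2 (by linarith)
    have h5 := le_of_mul_le_mul_left (h3.trans h4) (Real.exp_pos _)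
    linarith
end

section
/- Let 0 < ε < 1/2 and n ≥ 64, and let T be an ε-noisy boolean decision tree on n variables such that, for x uniform on {0,1}^n and over the internal noise of T, Pr[ T(x) = Parity(x) ] ≥ 3/4, where Parity(x) = x_1 ⊕ ⋯ ⊕ x_n. Then the depth of T is strictly greater than (n/2) · log₂(n/64) / log₂(1/ε). In particular, any ε-noisy decision tree computing parity with error at most 1/4 with respect to a uniform input has depth Ω(n · (log n) / log(1/ε)). -/
/-- The parity function on `n` bits: `Parity(x) = x_1 ⊕ ⋯ ⊕ x_n`. -/
def parityFun {n : ℕ} (x : Fin n → Bool) : Bool :=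
  decide ((Finset.univ.filter fun i => x i = true).card % 2 = 1)

lemma parity_indicator {n : ℕ} (x : Fin n → Bool) (l : Bool) :
    (if parityFun x = l then (1 : ℝ) else 0) =
      (1 + (if l then -1 else 1) * ∏ i, (if x i then (-1 : ℝ) else 1)) / 2 := by
  have h : ∏ i, (if x i then (-1 : ℝ) else 1) =
      (-1) ^ (Finset.univ.filter fun i => x i = true).card := by
    rw [Finset.prod_ite]
    simp
  rw [h]
  unfold parityFun
  rcases Nat.even_or_odd (Finset.univ.filter fun i => x i = true).card with he | ho
  · rw [he.neg_one_pow]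
    have := Nat.even_iff.mp he
    cases l <;> simp [this]
  · rw [ho.neg_one_pow]
    have := Nat.odd_iff.mp ho
    cases l <;> simp [this]

lemma leaf_bound {n : ℕ} (ε : ℝ) (hε0 : 0 < ε) (hε1 : ε < 1 / 2) (l : Bool)
    (w : Fin n → Bool → ℝ) (k : Fin n → ℕ) (B : ℝ)
    (hw : ∀ i b, 0 ≤ w i b)
    (hk : ∀ i b, ε ^ k i * w i b ≤ w i (!b))
    (hB : ∏ i, (1 - ε ^ k i) ≤ B) :
    ∑ x : Fin n → Bool, (∏ i, w i (x i)) * (if parityFun x = l then (1 : ℝ) else 0) ≤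
      (1 + B) / 2 * ∑ x : Fin n → Bool, ∏ i, w i (x i) := by
  have hM : ∑ x : Fin n → Bool, ∏ i, w i (x i) = ∏ i, (w i true + w i false) := by
    rw [← Fintype.prod_sum]
    simp
  have hS : ∑ x : Fin n → Bool, (∏ i, w i (x i)) * ∏ i, (if x i then (-1 : ℝ) else 1) =
      ∏ i, (- w i true + w i false) := by
    simp_rw [← Finset.prod_mul_distrib]
    rw [← Fintype.prod_sum (fun i b => w i b * (if b then (-1 : ℝ) else 1))]
    simp
  have habs : |∏ i, (- w i true + w i false)| ≤ B * ∏ i, (w i true + w i false) := by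
    rw [Finset.abs_prod]
    calc ∏ i, |- w i true + w i false|
        ≤ ∏ i, ((1 - ε ^ k i) * (w i true + w i false)) := by
          apply Finset.prod_le_prod
          · intros; positivity
          · intro i _
            have h1 := hk i true
            have h2 := hk i false
            simp at h1 h2
            have h3 := hw i true
            have h4 := hw i false
            have h5 : ε ^ k i ≤ 1 := pow_le_one₀ hε0.le (by linarith)
            rw [abs_le]
            constructor <;> nlinarith
      _ = (∏ i, (1 - ε ^ k i)) * ∏ i, (w i true + w i false) := Finset.prod_mul_distrib
      _ ≤ _ := by
          apply mul_le_mul_of_nonneg_right hB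
          exact Finset.prod_nonneg fun i _ => add_nonneg (hw _ _) (hw _ _)
  have : ∑ x : Fin n → Bool, (∏ i, w i (x i)) * (if parityFun x = l then (1 : ℝ) else 0) =
      (∏ i, (w i true + w i false) +
        (if l then -1 else 1) * ∏ i, (- w i true + w i false)) / 2 := by
    rw [← hM, ← hS, Finset.mul_sum, ← Finset.sum_add_distrib, Finset.sum_div]
    apply Finset.sum_congr rfl
    intro x _
    rw [parity_indicator]
    ring
  rw [this, hM]
  rw [abs_le] at habs
  cases l <;> simp <;> linarith [habs.1, habs.2]

lemma reweight {n : ℕ} (w : Fin n → Bool → ℝ) (i : Fin n) (c : Bool → ℝ) (x : Fin n → Bool) :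
    ∏ j, (w j (x j) * (if j = i then c (x j) else 1)) = (∏ j, w j (x j)) * c (x i) := by
  rw [Finset.prod_mul_distrib]
  simp

lemma tree_bound {n : ℕ} (ε : ℝ) (hε0 : 0 < ε) (hε1 : ε < 1 / 2) (D : ℕ) (B : ℝ)
    (hB : ∀ k : Fin n → ℕ, ∑ i, k i ≤ D → ∏ i, (1 - ε ^ k i) ≤ B)
    (T : NoisyTree n Bool) : ∀ (w : Fin n → Bool → ℝ) (k : Fin n → ℕ),
    (∀ i b, 0 ≤ w i b) → (∀ i b, ε ^ k i * w i b ≤ w i (!b)) →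
    ∑ i, k i + T.depth ≤ D →
    ∑ x : Fin n → Bool, (∏ i, w i (x i)) * T.leafDist ε x (parityFun x) ≤
      (1 + B) / 2 * ∑ x : Fin n → Bool, ∏ i, w i (x i) := by
  induction T with
  | leaf l =>
    intro w k hw hk hD
    simp only [NoisyTree.leafDist]
    exact leaf_bound ε hε0 hε1 l w k B hw hk (hB k (by omega))
  | node i t0 t1 ih0 ih1 =>
    intro w k hw hk hD
    simp only [NoisyTree.depth] at hD
    have hsum : ∑ j, (k j + if j = i then 1 else 0) = ∑ j, k j + 1 := by
      rw [Finset.sum_add_distrib]; simp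
    have key : ∀ c : Bool → ℝ, (∀ b, 0 ≤ c b) → (∀ b, ε * c b ≤ c (!b)) →
        (∀ j b, 0 ≤ w j b * (if j = i then c b else 1)) ∧
        (∀ j b, ε ^ (k j + if j = i then 1 else 0) * (w j b * (if j = i then c b else 1)) ≤
          w j (!b) * (if j = i then c (!b) else 1)) := by
      intro c hc hc2
      refine ⟨fun j b => ?_, fun j b => ?_⟩
      · apply mul_nonneg (hw _ _)
        split_ifs
        · exact hc b
        · norm_num
      · split_ifs
        · calc _ = (ε ^ k j * w j b) * (ε * c b) := by ring
            _ ≤ _ := mul_le_mul (hk j b) (hc2 b) (mul_nonneg hε0.le (hc b)) (hw _ _)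
        · simpa using hk j b
    have k0 := key (fun b => if b then ε else 1 - ε)
      (by intro b; cases b <;> simp <;> linarith) (by intro b; cases b <;> simp <;> nlinarith)
    have k1 := key (fun b => if b then 1 - ε else ε)
      (by intro b; cases b <;> simp <;> linarith) (by intro b; cases b <;> simp <;> nlinarith)
    have b0 := ih0 _ _ k0.1 k0.2 (by rw [hsum]; omega)
    have b1 := ih1 _ _ k1.1 k1.2 (by rw [hsum]; omega)
    simp only [reweight w i (fun b => if b then ε else 1 - ε)] at b0
    simp only [reweight w i (fun b => if b then 1 - ε else ε)] at b1
    have e1 : ∑ x : Fin n → Bool, (∏ j, w j (x j)) *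
        (NoisyTree.node i t0 t1).leafDist ε x (parityFun x) =
        ∑ x : Fin n → Bool, (∏ j, w j (x j)) * (if x i then ε else 1 - ε) *
          t0.leafDist ε x (parityFun x) +
        ∑ x : Fin n → Bool, (∏ j, w j (x j)) * (if x i then 1 - ε else ε) *
          t1.leafDist ε x (parityFun x) := by
      rw [← Finset.sum_add_distrib]
      apply Finset.sum_congr rfl
      intro x _
      simp only [NoisyTree.leafDist]
      ring
    have e2 : ∑ x : Fin n → Bool, (∏ j, w j (x j)) =
        ∑ x : Fin n → Bool, (∏ j, w j (x j)) * (if x i then ε else 1 - ε) +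
        ∑ x : Fin n → Bool, (∏ j, w j (x j)) * (if x i then 1 - ε else ε) := by
      rw [← Finset.sum_add_distrib]
      apply Finset.sum_congr rfl
      intro x _
      split_ifs <;> ring
    rw [e1, e2, mul_add]
    exact add_le_add b0 b1

lemma prod_bound {n : ℕ} (hn : 64 ≤ n) (ε : ℝ) (hε0 : 0 < ε) (hε1 : ε < 1 / 2) (D : ℕ)
    (hD : (D : ℝ) * Real.log (1 / ε) ≤ n * Real.log n)
    (k : Fin n → ℕ) (hk : ∑ i, k i ≤ D) : ∏ i, (1 - ε ^ k i) ≤ Real.exp (-1) := by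
  have hn0 : (0 : ℝ) < n := by exact_mod_cast (by omega : 0 < n)
  have hL : 0 < Real.log (1 / ε) := Real.log_pos (by rw [lt_div_iff₀ hε0]; linarith)
  have hlow : ∀ i, (1 / n : ℝ) * (1 - Real.log (1 / ε) * k i + Real.log n) ≤ ε ^ k i := by
    intro i
    have h1 : ε ^ k i = (1 / n : ℝ) * Real.exp (- Real.log (1 / ε) * k i + Real.log n) := by
      rw [Real.exp_add, Real.exp_log hn0, mul_comm _ (k i : ℝ), Real.exp_nat_mul, Real.exp_neg,
        Real.exp_log (by positivity)]
      field_simp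
    rw [h1]
    apply mul_le_mul_of_nonneg_left _ (by positivity)
    have := Real.add_one_le_exp (- Real.log (1 / ε) * k i + Real.log n)
    linarith
  have hs : 1 ≤ ∑ i, ε ^ k i := by
    have h := Finset.sum_le_sum (s := Finset.univ) fun i _ => hlow i
    refine le_trans ?_ h
    rw [← Finset.mul_sum, Finset.sum_add_distrib, Finset.sum_sub_distrib, ← Finset.mul_sum]
    simp only [Finset.sum_const, Finset.card_univ, Fintype.card_fin, nsmul_eq_mul, mul_one]
    have hk' : (∑ i, (k i : ℝ)) ≤ D := by exact_mod_cast hk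
    have := mul_le_mul_of_nonneg_left hk' hL.le
    rw [one_div, inv_mul_eq_div, le_div_iff₀ hn0]
    linarith
  calc ∏ i, (1 - ε ^ k i) ≤ ∏ i, Real.exp (- ε ^ k i) := by
        apply Finset.prod_le_prod
        · intro i _
          have : ε ^ k i ≤ 1 := pow_le_one₀ hε0.le (by linarith)
          linarith
        · intro i _
          have := Real.add_one_le_exp (- ε ^ k i)
          linarith
    _ = Real.exp (- ∑ i, ε ^ k i) := by rw [← Real.exp_sum, Finset.sum_neg_distrib]
    _ ≤ _ := Real.exp_le_exp.mpr (by linarith)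

/-- If `n ≥ 64` and `T` is an `ε`-noisy boolean decision tree (leaves labeled by
output bits) computing parity with success probability at least `3/4` with respect
to a uniform input `x` and the internal noise of `T`, then the depth of `T` is
strictly greater than `(n/2) · log₂(n/64) / log₂(1/ε)`; in particular any such tree
has depth `Ω(n log n / log(1/ε))`. -/
theorem noisy_tree_parity_depth_lb {n : ℕ} (ε : ℝ)
    (hε0 : 0 < ε) (hε1 : ε < 1 / 2) (hn : 64 ≤ n)
    (T : NoisyTree n Bool)
    (hsucc : (3 / 4 : ℝ) ≤
      (1 / 2 ^ n) * ∑ x : Fin n → Bool, T.leafDist ε x (parityFun x)) :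
    ((n : ℝ) / 2) * Real.logb 2 ((n : ℝ) / 64) / Real.logb 2 (1 / ε) <
      (T.depth : ℝ) := by
  by_contra hcon
  push Not at hcon
  have hn0 : (64 : ℝ) ≤ n := by exact_mod_cast hn
  have hL : 0 < Real.log (1 / ε) := Real.log_pos (by rw [lt_div_iff₀ hε0]; linarith)
  have hl2 : 0 < Real.log 2 := Real.log_pos (by norm_num)
  have hD : (T.depth : ℝ) * Real.log (1 / ε) ≤ n * Real.log n := by
    have e : ((n : ℝ) / 2) * Real.logb 2 ((n : ℝ) / 64) / Real.logb 2 (1 / ε) =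
        (n : ℝ) / 2 * Real.log ((n : ℝ) / 64) / Real.log (1 / ε) := by
      unfold Real.logb
      field_simp
    rw [e, le_div_iff₀ hL] at hcon
    have h1 : Real.log ((n : ℝ) / 64) ≤ Real.log n :=
      Real.log_le_log (by positivity) (by linarith)
    have h2 : 0 ≤ Real.log n := Real.log_nonneg (by linarith)
    nlinarith
  have h := tree_bound ε hε0 hε1 T.depth (Real.exp (-1))
    (fun k hk => prod_bound hn ε hε0 hε1 T.depth hD k hk) T (fun _ _ => 1) (fun _ => 0)
    (by simp) (by simp) (by simp)
  simp only [Finset.prod_const_one, one_mul, Finset.sum_const, Finset.card_univ,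
    Fintype.card_pi, Fintype.card_bool, Finset.prod_const, Fintype.card_fin, nsmul_eq_mul,
    mul_one] at h
  push_cast at h
  have hp : (0 : ℝ) < 2 ^ n := by positivity
  rw [one_div, inv_mul_eq_div, le_div_iff₀ hp] at hsucc
  have he : Real.exp (-1) < 1 / 2 := by
    have := Real.exp_one_gt_d9
    rw [Real.exp_neg, one_div]
    exact inv_strictAnti₀ (by norm_num) (by linarith)
  have := mul_lt_mul_of_pos_right he hp
  linarith
end

section
/- Let 0 < ε < 1/2, let s ≥ 64 with s dividing n, and let f : {0,1}^n → {0,1} be t-resilient for t = n(1 - 1/s), i.e., f takes the value 1 on exactly half the points of every subcube of dimension n - t = n/s. Then every ε-noisy boolean decision tree T on n variables satisfying Pr[ T(x) = f(x) ] ≥ 3/4 (for x uniform on {0,1}^n and over the internal noise of T) has depth strictly greater than (n/2) · log₂(s/64) / log₂(1/ε). -/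
namespace NTR

/-- sign of `f` -/
noncomputable def sg {n : ℕ} (f : (Fin n → Bool) → Bool) (x : Fin n → Bool) : ℝ :=
  if f x = true then 1 else -1

lemma abs_sg {n : ℕ} (f : (Fin n → Bool) → Bool) (x : Fin n → Bool) : |sg f x| = 1 := by
  unfold sg; split_ifs <;> simp

lemma card_cube {n : ℕ} (F : Finset (Fin n)) (a : Fin n → Bool) :
    (Finset.univ.filter fun x : Fin n → Bool => ∀ j ∉ F, x j = a j).card = 2 ^ F.card := by
  have : (Finset.univ.filter fun x : Fin n → Bool => ∀ j ∉ F, x j = a j)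
      = Fintype.piFinset (fun j => if j ∈ F then (Finset.univ : Finset Bool) else {a j}) := by
    ext x
    simp only [Finset.mem_filter, Finset.mem_univ, true_and, Fintype.mem_piFinset]
    refine forall_congr' fun j => ?_
    by_cases h : j ∈ F <;> simp [h]
  rw [this, Fintype.card_piFinset]
  have : ∀ j, (if j ∈ F then (Finset.univ : Finset Bool) else {a j}).card
      = if j ∈ F then 2 else 1 := by
    intro j; split_ifs <;> simp
  simp only [this, Finset.prod_ite, Finset.prod_const, one_pow, mul_one]
  simp

lemma sum_cube {n r : ℕ} (f : (Fin n → Bool) → Bool)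
    (hres : ∀ F : Finset (Fin n), F.card = r → ∀ a : Fin n → Bool,
      2 * (Finset.univ.filter fun x : Fin n → Bool =>
          (∀ j ∉ F, x j = a j) ∧ f x = true).card = 2 ^ r)
    (F : Finset (Fin n)) (hF : F.card = r) (a : Fin n → Bool) :
    ∑ x ∈ Finset.univ.filter (fun x : Fin n → Bool => ∀ j ∉ F, x j = a j), sg f x = 0 := by
  have h1 := hres F hF a
  have h2 := card_cube F a
  have h3 : ∀ x, sg f x = 2 * (if f x = true then (1 : ℝ) else 0) - 1 := by
    intro x; unfold sg; split_ifs <;> norm_num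
  simp only [h3, Finset.sum_sub_distrib, ← Finset.mul_sum]
  rw [Finset.sum_boole, Finset.filter_filter, Finset.sum_const, h2, hF]
  have : (2 : ℝ) * ((Finset.univ.filter fun x : Fin n → Bool =>
          (∀ j ∉ F, x j = a j) ∧ f x = true).card : ℝ) = 2 ^ r := by exact_mod_cast h1
  rw [this]; simp

lemma sum_zero {n r : ℕ} (f : (Fin n → Bool) → Bool)
    (hres : ∀ F : Finset (Fin n), F.card = r → ∀ a : Fin n → Bool,
      2 * (Finset.univ.filter fun x : Fin n → Bool =>
          (∀ j ∉ F, x j = a j) ∧ f x = true).card = 2 ^ r)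
    (U : Finset (Fin n)) (hU : r ≤ U.card) (g : (Fin n → Bool) → ℝ)
    (hg : ∀ x y : Fin n → Bool, (∀ j ∉ U, x j = y j) → g x = g y) :
    ∑ x, g x * sg f x = 0 := by
  obtain ⟨F, hFU, hF⟩ := Finset.exists_subset_card_eq hU
  rw [← Finset.sum_fiberwise (s := Finset.univ)
    (g := fun (x : Fin n → Bool) (j : Fin n) => if j ∈ F then false else x j)]
  refine Finset.sum_eq_zero fun a _ => ?_
  by_cases hne : ∃ x0 : Fin n → Bool, (fun j => if j ∈ F then false else x0 j) = a
  · obtain ⟨x0, rfl⟩ := hne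
    have hset : (Finset.univ.filter fun x : Fin n → Bool =>
        (fun j => if j ∈ F then false else x j) = (fun j => if j ∈ F then false else x0 j))
        = Finset.univ.filter (fun x : Fin n → Bool => ∀ j ∉ F, x j = x0 j) := by
      ext x
      simp only [Finset.mem_filter, Finset.mem_univ, true_and, funext_iff]
      refine forall_congr' fun j => ?_
      by_cases h : j ∈ F <;> simp [h]
    rw [hset]
    have : ∀ x ∈ Finset.univ.filter (fun x : Fin n → Bool => ∀ j ∉ F, x j = x0 j),
        g x * sg f x = g x0 * sg f x := by
      intro x hx
      rw [Finset.mem_filter] at hx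
      rw [hg x x0 fun j hj => hx.2 j fun h => hj (hFU h)]
    rw [Finset.sum_congr rfl this, ← Finset.mul_sum, sum_cube f hres F hF x0, mul_zero]
  · refine Finset.sum_eq_zero fun x hx => ?_
    rw [Finset.mem_filter] at hx
    exact absurd ⟨x, hx.2⟩ hne

lemma leaf_bound {n r : ℕ} (f : (Fin n → Bool) → Bool)
    (hres : ∀ F : Finset (Fin n), F.card = r → ∀ a : Fin n → Bool,
      2 * (Finset.univ.filter fun x : Fin n → Bool =>
          (∀ j ∉ F, x j = a j) ∧ f x = true).card = 2 ^ r)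
    (Q : Fin n → Bool → ℝ) (m : Fin n → ℝ) (hm : ∀ i, 0 ≤ m i)
    (hQm : ∀ i b, m i ≤ Q i b) (hQ1 : ∀ i b, Q i b ≤ 1)
    (hsum : 64 * (r : ℝ) ≤ ∑ i, m i) :
    |∑ x : Fin n → Bool, (∏ i, Q i (x i)) * sg f x| ≤
      (2 ^ r * Real.exp (-(32 * r))) * ∑ x : Fin n → Bool, ∏ i, Q i (x i) := by
  set w : Finset (Fin n) → (Fin n → Bool) → ℝ := fun U x =>
    (∏ i ∈ U, m i) * ∏ i ∈ Finset.univ \ U, (Q i (x i) - m i) with hw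
  have hw0 : ∀ U x, 0 ≤ w U x := fun U x =>
    mul_nonneg (Finset.prod_nonneg fun i _ => hm i)
      (Finset.prod_nonneg fun i _ => sub_nonneg.2 (hQm i _))
  have hexp : ∀ x : Fin n → Bool, ∏ i, Q i (x i) = ∑ U : Finset (Fin n), w U x := by
    intro x
    have := Finset.prod_add m (fun i => Q i (x i) - m i) Finset.univ
    simpa using this
  have hbig : ∀ U : Finset (Fin n), r ≤ U.card → ∑ x, w U x * sg f x = 0 := by
    intro U hU
    refine sum_zero f hres U hU (w U) fun x y hxy => ?_
    simp only [hw]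
    congr 1
    refine Finset.prod_congr rfl fun i hi => ?_
    rw [hxy i (Finset.mem_sdiff.1 hi).2]
  have hUb : ∀ U : Finset (Fin n),
      |∑ x, w U x * sg f x| ≤ ∑ x, 2 ^ r * ((1 / 2) ^ U.card * w U x) := by
    intro U
    by_cases hU : r ≤ U.card
    · rw [hbig U hU, abs_zero]
      exact Finset.sum_nonneg fun x _ => by have := hw0 U x; positivity
    · refine (Finset.abs_sum_le_sum_abs _ _).trans (Finset.sum_le_sum fun x _ => ?_)
      rw [abs_mul, abs_sg, mul_one, abs_of_nonneg (hw0 U x), ← mul_assoc]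
      refine le_mul_of_one_le_left (hw0 U x) ?_
      rw [one_div, inv_pow, ← div_eq_mul_inv, one_le_div (by positivity)]
      exact pow_le_pow_right₀ (by norm_num) (by omega)
  have hx : ∀ x : Fin n → Bool, ∑ U : Finset (Fin n), (1 / 2) ^ U.card * w U x
      ≤ Real.exp (-(32 * r)) * ∏ i, Q i (x i) := by
    intro x
    have h1 : ∑ U : Finset (Fin n), (1 / 2) ^ U.card * w U x
        = ∏ i, (m i / 2 + (Q i (x i) - m i)) := by
      have := Finset.prod_add (fun i => m i / 2) (fun i => Q i (x i) - m i) Finset.univ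
      rw [this]
      simp only [Finset.powerset_univ, hw]
      refine Finset.sum_congr rfl fun U _ => ?_
      rw [← mul_assoc]
      congr 1
      simp only [div_eq_mul_inv, Finset.prod_mul_distrib, Finset.prod_const]
      ring
    have h2 : ∏ i, (m i / 2 + (Q i (x i) - m i)) ≤
        ∏ i, (Real.exp (-(m i / 2)) * Q i (x i)) := by
      refine Finset.prod_le_prod (fun i _ => ?_) fun i _ => ?_
      · linarith [hm i, hQm i (x i)]
      · have h3 := Real.add_one_le_exp (-(m i / 2))
        have h4 := hQm i (x i)
        have h5 := hQ1 i (x i)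
        have h6 := hm i
        nlinarith [mul_le_mul_of_nonneg_right h3 (h6.trans h4)]
    rw [h1]
    refine h2.trans ?_
    rw [Finset.prod_mul_distrib, ← Real.exp_sum]
    refine mul_le_mul_of_nonneg_right (Real.exp_le_exp.2 ?_)
      (Finset.prod_nonneg fun i _ => (hm i).trans (hQm i _))
    rw [Finset.sum_neg_distrib, ← Finset.sum_div]
    linarith
  calc |∑ x : Fin n → Bool, (∏ i, Q i (x i)) * sg f x|
      = |∑ U : Finset (Fin n), ∑ x, w U x * sg f x| := by
        rw [Finset.sum_comm]
        simp only [hexp, Finset.sum_mul]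
    _ ≤ ∑ U : Finset (Fin n), ∑ x, 2 ^ r * ((1 / 2) ^ U.card * w U x) :=
        (Finset.abs_sum_le_sum_abs _ _).trans (Finset.sum_le_sum fun U _ => hUb U)
    _ = ∑ x, 2 ^ r * ∑ U : Finset (Fin n), (1 / 2) ^ U.card * w U x := by
        rw [Finset.sum_comm]
        simp only [Finset.mul_sum]
    _ ≤ ∑ x : Fin n → Bool, 2 ^ r * (Real.exp (-(32 * r)) * ∏ i, Q i (x i)) :=
        Finset.sum_le_sum fun x _ => mul_le_mul_of_nonneg_left (hx x) (by positivity)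
    _ = _ := by
        rw [Finset.mul_sum]
        simp only [mul_assoc]

/-- update the likelihood of one variable -/
noncomputable def upd {n : ℕ} (Q : Fin n → Bool → ℝ) (i : Fin n) (c : Bool → ℝ) :
    Fin n → Bool → ℝ := fun j b => (if j = i then c b else 1) * Q j b

lemma prod_upd {n : ℕ} (Q : Fin n → Bool → ℝ) (i : Fin n) (c : Bool → ℝ) (x : Fin n → Bool) :
    ∏ j, upd Q i c j (x j) = c (x i) * ∏ j, Q j (x j) := by
  unfold upd
  rw [Finset.prod_mul_distrib]
  congr 1
  simp

lemma tree_bound {n : ℕ} {ε : ℝ} (hε0 : 0 < ε) (hε1 : ε < 1 / 2) (C : ℝ) (D : ℕ)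
    (f : (Fin n → Bool) → Bool)
    (hleaf : ∀ (Q : Fin n → Bool → ℝ) (k : Fin n → ℕ), (∀ i b, ε ^ k i ≤ Q i b) →
      (∀ i b, Q i b ≤ 1) → ∑ i, k i ≤ D →
      |∑ x : Fin n → Bool, (∏ i, Q i (x i)) * sg f x| ≤ C * ∑ x : Fin n → Bool, ∏ i, Q i (x i))
    (T : NoisyTree n Bool) : ∀ (Q : Fin n → Bool → ℝ) (k : Fin n → ℕ), (∀ i b, ε ^ k i ≤ Q i b) →
      (∀ i b, Q i b ≤ 1) → ∑ i, k i + T.depth ≤ D →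
      |∑ x : Fin n → Bool, (∏ i, Q i (x i)) *
        (sg f x * (T.leafDist ε x true - T.leafDist ε x false))|
        ≤ C * ∑ x : Fin n → Bool, ∏ i, Q i (x i) := by
  induction T with
  | leaf l =>
    intro Q k h1 h2 h3
    have := hleaf Q k h1 h2 (by simpa [NoisyTree.depth] using h3)
    cases l
    · simpa [NoisyTree.leafDist] using this
    · simpa [NoisyTree.leafDist] using this
  | node i t0 t1 ih0 ih1 =>
    intro Q k h1 h2 h3
    have hstep : ∀ c : Bool → ℝ, (∀ b, ε ≤ c b) → (∀ b, c b ≤ 1) →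
        (∀ j b, ε ^ (k j + if j = i then 1 else 0) ≤ upd Q i c j b) ∧
        (∀ j b, upd Q i c j b ≤ 1) := by
      intro c hc0 hc1
      refine ⟨fun j b => ?_, fun j b => ?_⟩
      · unfold upd
        split_ifs with h
        · rw [pow_add, pow_one, mul_comm]
          exact mul_le_mul (hc0 b) (h1 j b) (by positivity) (hε0.le.trans (hc0 b))
        · simpa using h1 j b
      · unfold upd
        have hq : 0 ≤ Q j b := le_trans (by positivity) (h1 j b)
        split_ifs with h
        · exact mul_le_one₀ (hc1 b) hq (h2 j b)
        · simpa using h2 j b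
    have hk : ∑ j, (k j + if j = i then 1 else 0) = ∑ j, k j + 1 := by
      simp [Finset.sum_add_distrib]
    simp only [NoisyTree.depth] at h3
    set c0 : Bool → ℝ := fun b => if b then ε else 1 - ε with hc0
    set c1 : Bool → ℝ := fun b => if b then 1 - ε else ε with hc1
    obtain ⟨a1, a2⟩ := hstep c0 (by rintro (_ | _) <;> simp [hc0] <;> linarith)
      (by rintro (_ | _) <;> simp [hc0] <;> linarith)
    obtain ⟨b1, b2⟩ := hstep c1 (by rintro (_ | _) <;> simp [hc1] <;> linarith)
      (by rintro (_ | _) <;> simp [hc1] <;> linarith)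
    have A := ih0 _ _ a1 a2 (by rw [hk]; have := le_max_left t0.depth t1.depth; omega)
    have B := ih1 _ _ b1 b2 (by rw [hk]; have := le_max_right t0.depth t1.depth; omega)
    simp only [prod_upd] at A B
    have hs : ∑ x : Fin n → Bool, ∏ j, Q j (x j) =
        (∑ x : Fin n → Bool, c0 (x i) * ∏ j, Q j (x j)) +
        ∑ x : Fin n → Bool, c1 (x i) * ∏ j, Q j (x j) := by
      rw [← Finset.sum_add_distrib]
      refine Finset.sum_congr rfl fun x _ => ?_
      simp only [hc0, hc1]
      split_ifs <;> ring
    rw [hs, mul_add]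
    refine le_trans (le_of_eq ?_) ((abs_add_le _ _).trans (add_le_add A B))
    rw [← Finset.sum_add_distrib]
    congr 1
    refine Finset.sum_congr rfl fun x _ => ?_
    simp only [NoisyTree.leafDist, hc0, hc1]
    ring

lemma leafDist_sum {n : ℕ} (ε : ℝ) (T : NoisyTree n Bool) (x : Fin n → Bool) :
    T.leafDist ε x true + T.leafDist ε x false = 1 := by
  induction T with
  | leaf l => cases l <;> simp [NoisyTree.leafDist]
  | node i t0 t1 ih0 ih1 =>
    simp only [NoisyTree.leafDist]
    split_ifs
    · linear_combination ε * ih0 + (1 - ε) * ih1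
    · linear_combination (1 - ε) * ih0 + ε * ih1

lemma leafDist_f {n : ℕ} (ε : ℝ) (T : NoisyTree n Bool) (f : (Fin n → Bool) → Bool)
    (x : Fin n → Bool) :
    T.leafDist ε x (f x) = 1 / 2 + 1 / 2 *
      (sg f x * (T.leafDist ε x true - T.leafDist ε x false)) := by
  have := leafDist_sum ε T x
  unfold sg
  cases h : f x
  · simp; linarith
  · simp; linarith

end NTR

/-- If `s ≥ 64` divides `n` and `f : {0,1}^n → {0,1}` is `t`-resilient for
`t = n(1 - 1/s)`, i.e. `f` takes the value `1` on exactly half the points of every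
subcube of dimension `n - t = n/s`, then every `ε`-noisy boolean decision tree `T`
computing `f` with success probability at least `3/4` (over a uniform input and the
internal noise of `T`) has depth strictly greater than
`(n/2) · log₂(s/64) / log₂(1/ε)`. -/
theorem noisy_tree_resilient_depth_lb {n s : ℕ} (ε : ℝ)
    (hε0 : 0 < ε) (hε1 : ε < 1 / 2) (hs : 64 ≤ s) (hdvd : s ∣ n)
    (f : (Fin n → Bool) → Bool)
    (hres : ∀ F : Finset (Fin n), F.card = n / s → ∀ a : Fin n → Bool,
      2 * (Finset.univ.filter fun x : Fin n → Bool =>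
          (∀ j ∉ F, x j = a j) ∧ f x = true).card = 2 ^ (n / s))
    (T : NoisyTree n Bool)
    (hsucc : (3 / 4 : ℝ) ≤
      (1 / 2 ^ n) * ∑ x : Fin n → Bool, T.leafDist ε x (f x)) :
    ((n : ℝ) / 2) * Real.logb 2 ((s : ℝ) / 64) / Real.logb 2 (1 / ε) <
      (T.depth : ℝ) := by
  obtain ⟨r, rfl⟩ := hdvd
  have hs0 : 0 < s := by omega
  rw [Nat.mul_div_cancel_left r hs0] at hres
  have hr : 1 ≤ r := by
    by_contra h
    have h0 : r = 0 := by omega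
    have := hres ∅ (by simp [h0]) (fun _ => false)
    have h1 : 2 ^ r = 1 := by rw [h0, pow_zero]
    omega
  by_contra hD
  rw [not_lt] at hD
  have hsR : (64 : ℝ) ≤ s := by exact_mod_cast hs
  set L : ℝ := Real.log (1 / ε) with hL
  have hLpos : 0 < L := Real.log_pos (by rw [lt_div_iff₀ hε0]; linarith)
  set a : ℝ := Real.log ((s : ℝ) / 64) / 2 with ha
  have ha0 : 0 ≤ a := by
    have := Real.log_nonneg (x := (s : ℝ) / 64) (by rw [le_div_iff₀ (by norm_num)]; linarith)
    positivity
  have hDL : (T.depth : ℝ) * L ≤ ((s * r : ℕ) : ℝ) * a := by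
    have h2 : (0 : ℝ) < Real.log 2 := Real.log_pos (by norm_num)
    have e : (((s * r : ℕ) : ℝ) / 2) * Real.logb 2 ((s : ℝ) / 64) / Real.logb 2 (1 / ε)
        = ((s * r : ℕ) : ℝ) * a / L := by
      simp only [Real.logb, ha, ← hL]
      field_simp
    rw [e, le_div_iff₀ hLpos] at hD
    exact hD
  have hexpa : (64 : ℝ) / s ≤ Real.exp (-a) := by
    have : (64 : ℝ) / s = Real.exp (-(2 * a)) := by
      rw [ha, mul_div_cancel₀ _ (by norm_num : (2 : ℝ) ≠ 0), Real.exp_neg,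
        Real.exp_log (by positivity), inv_div]
    rw [this]
    exact Real.exp_le_exp.2 (by linarith)
  set C : ℝ := 2 ^ r * Real.exp (-(32 * r)) with hC
  have key := NTR.tree_bound hε0 hε1 C T.depth f (fun Q k h1 h2 h3 => by
    refine NTR.leaf_bound f hres Q (fun i => ε ^ k i) (fun i => by positivity) h1 h2 ?_
    have hpt : ∀ i, Real.exp (-a) * (1 + a - k i * L) ≤ ε ^ k i := by
      intro i
      have e : ε ^ k i = Real.exp (-a) * Real.exp (a - k i * L) := by
        rw [← Real.exp_add]
        have : -a + (a - k i * L) = k i * Real.log ε := by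
          rw [hL, one_div, Real.log_inv]; ring
        rw [this, Real.exp_nat_mul, Real.exp_log hε0]
      rw [e]
      refine mul_le_mul_of_nonneg_left ?_ (Real.exp_pos _).le
      have := Real.add_one_le_exp (a - k i * L)
      linarith
    refine le_trans ?_ (Finset.sum_le_sum fun i _ => hpt i)
    rw [← Finset.mul_sum, Finset.sum_sub_distrib, ← Finset.sum_mul]
    simp only [Finset.sum_const, Finset.card_univ, Fintype.card_fin, nsmul_eq_mul]
    have h3' : (∑ i, (k i : ℝ)) ≤ T.depth := by exact_mod_cast h3
    have h4 := mul_le_mul_of_nonneg_right h3' hLpos.le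
    have h5 : ((s * r : ℕ) : ℝ) ≤ ((s * r : ℕ) : ℝ) * (1 + a) - (∑ i, (k i : ℝ)) * L := by
      linarith
    calc 64 * (r : ℝ) = 64 / s * ((s * r : ℕ) : ℝ) := by
          push_cast; field_simp
      _ ≤ _ := mul_le_mul hexpa h5 (by positivity) (Real.exp_pos _).le) T
    (fun _ _ => 1) (fun _ => 0) (by simp) (by simp) (by simp)
  have hC2 : C < 1 / 2 := by
    have e : C = (2 * Real.exp (-32)) ^ r := by
      rw [hC, mul_pow, ← Real.exp_nat_mul]
      congr 2; ring
    have hb : Real.exp (-32) < 1 / 4 := by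
      rw [Real.exp_neg, inv_lt_comm₀ (Real.exp_pos _) (by norm_num)]
      have := Real.add_one_le_exp (32 : ℝ)
      norm_num
      linarith
    have hp := Real.exp_pos (-32)
    rw [e]
    calc (2 * Real.exp (-32)) ^ r ≤ (2 * Real.exp (-32)) ^ 1 :=
          pow_le_pow_of_le_one (by positivity) (by linarith) hr
      _ < 1 / 2 := by linarith
  simp only [Finset.prod_const_one, one_mul, Finset.sum_const, Finset.card_univ,
    Fintype.card_fun, Fintype.card_bool, Fintype.card_fin, nsmul_eq_mul, mul_one] at key
  simp only [NTR.leafDist_f, Finset.sum_add_distrib, ← Finset.mul_sum, Finset.sum_const,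
    Finset.card_univ, Fintype.card_fun, Fintype.card_bool, Fintype.card_fin, nsmul_eq_mul] at hsucc
  push_cast at key hsucc
  have hk := (le_abs_self _).trans key
  have hN : (0 : ℝ) < 2 ^ (s * r) := by positivity
  rw [one_div, ← div_eq_inv_mul, le_div_iff₀ hN] at hsucc
  nlinarith
end

section
/- Let T be a randomized decision tree on inputs from {0,1}^k that computes a function f : {0,1}^k → {0,1} with error at most δ, i.e., for every input x, Pr[ T(x) ≠ f(x) ] ≤ δ over the internal randomness of T. Then there exists a sampling algorithm A which, on input x, first forms a masked string y ∈ {0,1,⋆}^k by independently keeping each coordinate x_i with probability q_i = 1 - β_i(T) and replacing it with ⋆ with probability β_i(T), and then outputs a (possibly randomized) guess depending only on y, such that for every input x, Pr[ A(x) ≠ f(x) ] ≤ δ. -/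
/-- A randomized decision tree on inputs from `{0,1}^k`: each internal node is
labeled by a coordinate `i ∈ {1,…,k}` and a function `g : {0,1} → [0,1]`; on input
`x`, the computation at such a node moves to the left child with probability
`g (x i)` and to the right child with probability `1 - g (x i)`, independently
across nodes; leaves are labeled by output bits. -/
inductive RTree (k : ℕ) : Type where
  | leaf : Bool → RTree k
  | node : Fin k → (Bool → ℝ) → RTree k → RTree k → RTree k

namespace RTree

/-- All transition probabilities lie in `[0,1]`. -/
def Valid {k : ℕ} : RTree k → Prop
  | .leaf _ => True
  | .node _ g t0 t1 => (∀ z, 0 ≤ g z ∧ g z ≤ 1) ∧ Valid t0 ∧ Valid t1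

/-- The probability, on input `x`, that the computation reaches the leaf at
position `p` (a root-to-leaf path, `false` = left, `true` = right). -/
def leafDist {k : ℕ} : RTree k → (Fin k → Bool) → List Bool → ℝ
  | .leaf _, _, p => if p = [] then 1 else 0
  | .node _ _ _ _, _, [] => 0
  | .node i g t0 _, x, false :: p => g (x i) * leafDist t0 x p
  | .node i g _ t1, x, true :: p => (1 - g (x i)) * leafDist t1 x p

/-- The probability that the output `T(x)` (the 0/1 label of the leaf reached)
is `1` on input `x`. -/
def outProb {k : ℕ} : RTree k → (Fin k → Bool) → ℝ
  | .leaf b, _ => if b then 1 else 0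
  | .node i g t0 t1, x => g (x i) * outProb t0 x + (1 - g (x i)) * outProb t1 x

/-- `IsMod i T T'` holds iff `T'` is obtained from `T` by keeping unchanged every
node labeled `i` and replacing, at each node labeled `j ≠ i`, the random transition
by an arbitrary fixed deterministic choice of child (a constant transition
function `1` or `0`). -/
def IsMod {k : ℕ} (i : Fin k) : RTree k → RTree k → Prop
  | .leaf b, .leaf b' => b' = b
  | .node j g t0 t1, .node j' g' t0' t1' =>
      j' = j ∧ IsMod i t0 t0' ∧ IsMod i t1 t1' ∧
        (if j = i then g' = g else g' = (fun _ => 1) ∨ g' = (fun _ => 0))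
  | _, _ => False

/-- The overlap `∑_ℓ min (D'_0 ℓ) (D'_1 ℓ)` of the two leaf distributions of a tree
whose only input dependence is on coordinate `i`, when `x i = 0` resp. `x i = 1`. -/
noncomputable def ovl {k : ℕ} (t : RTree k) : ℝ :=
  ∑' p : List Bool, min (t.leafDist (fun _ => false) p) (t.leafDist (fun _ => true) p)

/-- The uncertainty `β_i(T)` of `T` about coordinate `i`: the minimum, over all
trees `T'` obtained from `T` by fixing deterministic choices at all nodes labeled
`j ≠ i`, of the overlap between the leaf distributions of `T'` for `x i = 0` and
`x i = 1`. -/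
noncomputable def beta {k : ℕ} (t : RTree k) (i : Fin k) : ℝ :=
  sInf {v : ℝ | ∃ t', IsMod i t t' ∧ ovl t' = v}

end RTree

/-- The masked string `y ∈ {0,1,⋆}^k` obtained from `x` by keeping exactly the
coordinates in `S` (a `⋆` is modelled as `none`). -/
def mask {k : ℕ} (x : Fin k → Bool) (S : Finset (Fin k)) : Fin k → Option Bool :=
  fun i => if i ∈ S then some (x i) else none

namespace RTree

/-- Contribution of coordinate `i` (with value `b`) to the probability of a path. -/
def aw {k : ℕ} (i : Fin k) (b : Bool) : RTree k → List Bool → ℝ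
  | .leaf _, p => if p = [] then 1 else 0
  | .node _ _ _ _, [] => 0
  | .node j g t0 _, false :: p => (if i = j then g b else 1) * aw i b t0 p
  | .node j g _ t1, true :: p => (if i = j then 1 - g b else 1) * aw i b t1 p

/-- `r` is a realization plan for player `i` with total weight `c`. -/
def IsPlan {k : ℕ} (i : Fin k) : RTree k → (List Bool → ℝ) → ℝ → Prop
  | .leaf _, r, c => r [] = c
  | .node j _ t0 t1, r, c => ∃ c0 c1, (if i = j then c0 + c1 = c else c0 = c ∧ c1 = c) ∧
      IsPlan i t0 (fun p => r (false :: p)) c0 ∧ IsPlan i t1 (fun p => r (true :: p)) c1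

/-- Maximal flow value. -/
noncomputable def mf {k : ℕ} (i : Fin k) : RTree k → (List Bool → ℝ) → ℝ
  | .leaf _, m => m []
  | .node j _ t0 t1, m =>
      if i = j then mf i t0 (fun p => m (false :: p)) + mf i t1 (fun p => m (true :: p))
      else min (mf i t0 (fun p => m (false :: p))) (mf i t1 (fun p => m (true :: p)))

def IsLeafPath {k : ℕ} : RTree k → List Bool → Prop
  | .leaf _, p => p = []
  | .node _ _ _ _, [] => False
  | .node _ _ t0 _, false :: p => IsLeafPath t0 p
  | .node _ _ _ t1, true :: p => IsLeafPath t1 p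

/-- Output-one weight of a product of plans. -/
noncomputable def gw {k : ℕ} : RTree k → (Fin k → List Bool → ℝ) → ℝ
  | .leaf b, R => if b then ∏ i, R i [] else 0
  | .node _ _ t0 t1, R => gw t0 (fun i p => R i (false :: p)) + gw t1 (fun i p => R i (true :: p))

theorem mf_nonneg {k : ℕ} (i : Fin k) (t : RTree k) : ∀ (m : List Bool → ℝ), (∀ p, 0 ≤ m p) →
    0 ≤ mf i t m := by
  induction t with
  | leaf b => intro m h; exact h []
  | node j g t0 t1 ih0 ih1 =>
    intro m h
    have h0 := ih0 (fun p => m (false :: p)) (fun p => h _)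
    have h1 := ih1 (fun p => m (true :: p)) (fun p => h _)
    simp only [mf]
    split_ifs
    · exact add_nonneg h0 h1
    · exact le_min h0 h1

theorem exists_glue (w0 w1 : List Bool → ℝ) : ∃ w : List Bool → ℝ, w [] = 0 ∧
    (fun p => w (false :: p)) = w0 ∧ (fun p => w (true :: p)) = w1 :=
  ⟨fun p => match p with
    | [] => 0
    | false :: p => w0 p
    | true :: p => w1 p, rfl, rfl, rfl⟩

theorem exists_plan {k : ℕ} (i : Fin k) (t : RTree k) : ∀ (m : List Bool → ℝ), (∀ p, 0 ≤ m p) →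
    ∀ c, 0 ≤ c → c ≤ mf i t m → ∃ w, IsPlan i t w c ∧ ∀ p, 0 ≤ w p ∧ w p ≤ m p := by
  induction t with
  | leaf b =>
    intro m h c hc hcm
    refine ⟨fun p => if p = [] then c else 0, by simp [IsPlan], ?_⟩
    intro p
    by_cases hp : p = []
    · subst hp; simpa [mf] using And.intro hc hcm
    · simpa [hp] using h p
  | node j g t0 t1 ih0 ih1 =>
    intro m h c hc hcm
    have h0 := mf_nonneg i t0 (fun p => m (false :: p)) (fun p => h _)
    have h1 := mf_nonneg i t1 (fun p => m (true :: p)) (fun p => h _)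
    have key : ∃ c0 c1, (if i = j then c0 + c1 = c else c0 = c ∧ c1 = c) ∧
        (0 ≤ c0 ∧ c0 ≤ mf i t0 (fun p => m (false :: p))) ∧
        (0 ≤ c1 ∧ c1 ≤ mf i t1 (fun p => m (true :: p))) := by
      simp only [mf] at hcm
      by_cases hij : i = j
      · simp only [hij, if_true] at hcm ⊢
        rw [hij] at h0 h1
        by_cases hle : c ≤ mf j t0 (fun p => m (false :: p))
        · exact ⟨c, 0, by ring, ⟨hc, hle⟩, le_rfl, h1⟩
        · exact ⟨mf j t0 (fun p => m (false :: p)), c - mf j t0 (fun p => m (false :: p)),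
            by ring, ⟨h0, le_rfl⟩, by linarith, by linarith⟩
      · simp only [hij, if_false] at hcm ⊢
        exact ⟨c, c, ⟨rfl, rfl⟩, ⟨hc, hcm.trans (min_le_left _ _)⟩,
          ⟨hc, hcm.trans (min_le_right _ _)⟩⟩
    obtain ⟨c0, c1, hcc, ⟨hc0, hc0m⟩, hc1, hc1m⟩ := key
    obtain ⟨w0, hw0, hb0⟩ := ih0 _ (fun p => h _) c0 hc0 hc0m
    obtain ⟨w1, hw1, hb1⟩ := ih1 _ (fun p => h _) c1 hc1 hc1m
    obtain ⟨w, hw, rfl, rfl⟩ := exists_glue w0 w1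
    refine ⟨w, ⟨c0, c1, hcc, hw0, hw1⟩, ?_⟩
    rintro (_ | ⟨b, p⟩)
    · rw [hw]; exact ⟨le_rfl, h []⟩
    · cases b
      · exact hb0 p
      · exact hb1 p

theorem IsPlan.lin {k : ℕ} {i : Fin k} (t : RTree k) : ∀ {r s : List Bool → ℝ} {c d : ℝ} (u v : ℝ),
    IsPlan i t r c → IsPlan i t s d →
    IsPlan i t (fun p => u * r p + v * s p) (u * c + v * d) := by
  induction t with
  | leaf b => intro r s c d u v h h'; simp only [IsPlan] at *; rw [h, h']
  | node j g t0 t1 ih0 ih1 =>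
    rintro r s c d u v ⟨c0, c1, hc, h0, h1⟩ ⟨d0, d1, hd, h0', h1'⟩
    refine ⟨u * c0 + v * d0, u * c1 + v * d1, ?_, ih0 u v h0 h0', ih1 u v h1 h1'⟩
    split_ifs at *
    · rw [← hc, ← hd]; ring
    · simp [hc, hd]

theorem IsPlan.smul {k : ℕ} {i : Fin k} {t : RTree k} {r : List Bool → ℝ} {c : ℝ} (u : ℝ)
    (h : IsPlan i t r c) : IsPlan i t (fun p => u * r p) (u * c) := by
  simpa using IsPlan.lin t u 0 h h

theorem IsPlan.nonneg {k : ℕ} {i : Fin k} (t : RTree k) : ∀ {r : List Bool → ℝ} {c : ℝ},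
    IsPlan i t r c → (∀ p, 0 ≤ r p) → 0 ≤ c := by
  induction t with
  | leaf b => intro r c h hr; simp only [IsPlan] at h; rw [← h]; exact hr []
  | node j g t0 t1 ih0 ih1 =>
    rintro r c ⟨c0, c1, hc, h0, h1⟩ hr
    have := ih0 h0 (fun p => hr _)
    have := ih1 h1 (fun p => hr _)
    split_ifs at hc
    · linarith
    · linarith [hc.1]

theorem IsPlan.zero {k : ℕ} {i : Fin k} (t : RTree k) : ∀ {r : List Bool → ℝ},
    IsPlan i t r 0 → (∀ p, 0 ≤ r p) → (∀ p, ¬ IsLeafPath t p → r p = 0) → ∀ p, r p = 0 := by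
  induction t with
  | leaf b =>
    intro r h hr ho p
    simp only [IsPlan] at h
    by_cases hp : p = []
    · rw [hp, h]
    · exact ho p hp
  | node j g t0 t1 ih0 ih1 =>
    rintro r ⟨c0, c1, hc, h0, h1⟩ hr ho
    have e0 := IsPlan.nonneg t0 h0 (fun p => hr _)
    have e1 := IsPlan.nonneg t1 h1 (fun p => hr _)
    have z : c0 = 0 ∧ c1 = 0 := by
      split_ifs at hc
      · constructor <;> linarith
      · exact hc
    obtain ⟨rfl, rfl⟩ := z
    rintro (_ | ⟨b, p⟩)
    · exact ho [] (by simp [IsLeafPath])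
    · cases b
      · exact ih0 h0 (fun p => hr _) (fun p hp => ho (false :: p) hp) p
      · exact ih1 h1 (fun p => hr _) (fun p hp => ho (true :: p) hp) p

theorem aw_plan {k : ℕ} (i : Fin k) (b : Bool) (t : RTree k) : IsPlan i t (aw i b t) 1 := by
  induction t with
  | leaf _ => simp [IsPlan, aw]
  | node j g t0 t1 ih0 ih1 =>
    refine ⟨(if i = j then g b else 1) * 1, (if i = j then 1 - g b else 1) * 1, ?_,
      ih0.smul _, ih1.smul _⟩
    split_ifs <;> simp

theorem aw_off {k : ℕ} (i : Fin k) (b : Bool) (t : RTree k) :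
    ∀ p, ¬ IsLeafPath t p → aw i b t p = 0 := by
  induction t with
  | leaf _ => intro p hp; simp only [IsLeafPath] at hp; simp [aw, hp]
  | node j g t0 t1 ih0 ih1 =>
    rintro (_ | ⟨b, p⟩) hp
    · rfl
    · cases b
      · simp only [aw, ih0 p hp, mul_zero]
      · simp only [aw, ih1 p hp, mul_zero]

theorem aw_nonneg {k : ℕ} (i : Fin k) (b : Bool) (t : RTree k) (ht : t.Valid) :
    ∀ p, 0 ≤ aw i b t p := by
  induction t with
  | leaf _ => intro p; simp only [aw]; split_ifs <;> simp
  | node j g t0 t1 ih0 ih1 =>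
    obtain ⟨hg, h0, h1⟩ := ht
    have := hg b
    rintro (_ | ⟨c, p⟩)
    · exact le_rfl
    · cases c
      · simp only [aw]
        refine mul_nonneg ?_ (ih0 h0 p)
        split_ifs <;> linarith
      · simp only [aw]
        refine mul_nonneg ?_ (ih1 h1 p)
        split_ifs <;> linarith

theorem leafDist_nonneg {k : ℕ} (x : Fin k → Bool) (t : RTree k) (ht : t.Valid) :
    ∀ p, 0 ≤ leafDist t x p := by
  induction t with
  | leaf _ => intro p; simp only [leafDist]; split_ifs <;> simp
  | node j g t0 t1 ih0 ih1 =>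
    obtain ⟨hg, h0, h1⟩ := ht
    have := hg (x j)
    rintro (_ | ⟨c, p⟩)
    · exact le_rfl
    · cases c
      · simp only [leafDist]
        exact mul_nonneg (by linarith) (ih0 h0 p)
      · simp only [leafDist]
        exact mul_nonneg (by linarith) (ih1 h1 p)

theorem IsMod.valid {k : ℕ} (i : Fin k) (t : RTree k) : ∀ t', t.Valid → IsMod i t t' →
    t'.Valid := by
  induction t with
  | leaf _ =>
    rintro (_ | _) ht h
    · trivial
    · exact h.elim
  | node j g t0 t1 ih0 ih1 =>
    rintro (_ | ⟨j', g', t0', t1'⟩) ht h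
    · exact h.elim
    · obtain ⟨hg, h0, h1⟩ := ht
      obtain ⟨-, m0, m1, hm⟩ := h
      refine ⟨?_, ih0 _ h0 m0, ih1 _ h1 m1⟩
      split_ifs at hm
      · rw [hm]; exact hg
      · rcases hm with rfl | rfl <;> simp

theorem hasSum_list (h : List Bool → ℝ) (s0 s1 : ℝ) (hn : h [] = 0)
    (h0 : HasSum (fun p => h (false :: p)) s0) (h1 : HasSum (fun p => h (true :: p)) s1) :
    HasSum h (s0 + s1) := by
  let e0 : List Bool → ℝ := fun p => match p with
    | false :: p => h (false :: p)
    | _ => 0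
  let e1 : List Bool → ℝ := fun p => match p with
    | true :: p => h (true :: p)
    | _ => 0
  have i0 : Function.Injective (fun p : List Bool => false :: p) := fun a b hab => by simpa using hab
  have i1 : Function.Injective (fun p : List Bool => true :: p) := fun a b hab => by simpa using hab
  have a0 : HasSum e0 s0 := by
    rw [← i0.hasSum_iff]
    · exact h0
    · rintro (_ | ⟨b, p⟩) hp
      · rfl
      · cases b
        · exact (hp ⟨p, rfl⟩).elim
        · rfl
  have a1 : HasSum e1 s1 := by
    rw [← i1.hasSum_iff]
    · exact h1
    · rintro (_ | ⟨b, p⟩) hp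
      · rfl
      · cases b
        · rfl
        · exact (hp ⟨p, rfl⟩).elim
  have := a0.add a1
  convert this using 1
  funext p
  rcases p with _ | ⟨b, p⟩
  · simp [e0, e1, hn]
  · cases b <;> simp [e0, e1]

theorem exists_mod_ovl {k : ℕ} (i : Fin k) (t : RTree k) : ∀ A0 A1 : ℝ, ∃ t', IsMod i t t' ∧
    HasSum (fun p => min (A0 * t'.leafDist (fun _ => false) p) (A1 * t'.leafDist (fun _ => true) p))
      (mf i t (fun p => min (A0 * aw i false t p) (A1 * aw i true t p))) := by
  induction t with
  | leaf b =>
    intro A0 A1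
    refine ⟨.leaf b, rfl, ?_⟩
    simp only [mf, aw, leafDist]
    have := hasSum_ite_eq (α := ℝ) ([] : List Bool) (min A0 A1)
    convert this using 2 with p
    · split_ifs <;> simp
    all_goals simp
  | node j g t0 t1 ih0 ih1 =>
    intro A0 A1
    by_cases h : i = j
    · subst h
      obtain ⟨u, hu, su⟩ := ih0 (A0 * g false) (A1 * g true)
      obtain ⟨v, hv, sv⟩ := ih1 (A0 * (1 - g false)) (A1 * (1 - g true))
      refine ⟨.node i g u v, ⟨rfl, hu, hv, by simp⟩, ?_⟩
      simp only [mf, if_true, aw]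
      simp only [mul_assoc] at su sv
      refine hasSum_list _ _ _ (by simp [leafDist]) ?_ ?_
      · exact su
      · exact sv
    · obtain ⟨u, hu, su⟩ := ih0 A0 A1
      obtain ⟨v, hv, sv⟩ := ih1 A0 A1
      simp only [mf, h, if_false, aw, one_mul]
      rcases le_total (mf i t0 (fun p => min (A0 * aw i false t0 p) (A1 * aw i true t0 p)))
        (mf i t1 (fun p => min (A0 * aw i false t1 p) (A1 * aw i true t1 p))) with hle | hle
      · refine ⟨.node j (fun _ => 1) u v, ⟨rfl, hu, hv, by simp [Ne.symm h]⟩, ?_⟩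
        rw [min_eq_left hle, ← add_zero (mf i t0 _)]
        refine hasSum_list _ _ _ (by simp [leafDist]) ?_ ?_
        · simpa [leafDist] using su
        · simpa [leafDist] using (hasSum_zero : HasSum (fun _ : List Bool => (0 : ℝ)) 0)
      · refine ⟨.node j (fun _ => 0) u v, ⟨rfl, hu, hv, by simp [Ne.symm h]⟩, ?_⟩
        rw [min_eq_right hle, ← zero_add (mf i t1 _)]
        refine hasSum_list _ _ _ (by simp [leafDist]) ?_ ?_
        · simpa [leafDist] using (hasSum_zero : HasSum (fun _ : List Bool => (0 : ℝ)) 0)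
        · simpa [leafDist] using sv

theorem beta_nonneg {k : ℕ} (i : Fin k) (t : RTree k) (ht : t.Valid) : 0 ≤ t.beta i := by
  apply Real.sInf_nonneg
  rintro _ ⟨t', h, rfl⟩
  have hv := IsMod.valid i t t' ht h
  exact tsum_nonneg fun p => le_min (leafDist_nonneg _ _ hv p) (leafDist_nonneg _ _ hv p)

theorem beta_le {k : ℕ} (i : Fin k) (t : RTree k) (ht : t.Valid) :
    t.beta i ≤ mf i t (fun p => min (aw i false t p) (aw i true t p)) := by
  obtain ⟨t', h, hs⟩ := exists_mod_ovl i t 1 1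
  simp only [one_mul] at hs
  refine csInf_le ⟨0, ?_⟩ ⟨t', h, hs.tsum_eq⟩
  rintro _ ⟨t', h, rfl⟩
  have hv := IsMod.valid i t t' ht h
  exact tsum_nonneg fun p => le_min (leafDist_nonneg _ _ hv p) (leafDist_nonneg _ _ hv p)

theorem exists_resp {k : ℕ} (i : Fin k) (t : RTree k) (ht : t.Valid) :
    ∃ R : Option Bool → List Bool → ℝ, (∀ o, IsPlan i t (R o) 1 ∧ ∀ p, 0 ≤ R o p) ∧
      ∀ b p, (1 - t.beta i) * R (some b) p + t.beta i * R none p = aw i b t p := by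
  have hb0 := beta_nonneg i t ht
  obtain ⟨w, hw, hwb⟩ := exists_plan i t _
    (fun p => le_min (aw_nonneg i false t ht p) (aw_nonneg i true t ht p)) _ hb0 (beta_le i t ht)
  set β := t.beta i with hβ
  have hle : ∀ b p, w p ≤ aw i b t p := by
    intro b p
    cases b
    · exact (hwb p).2.trans (min_le_left _ _)
    · exact (hwb p).2.trans (min_le_right _ _)
  have hd : ∀ b, IsPlan i t (fun p => aw i b t p - w p) (1 - β) := by
    intro b
    have := IsPlan.lin t 1 (-1) (aw_plan i b t) hw
    convert this using 1
    · funext p; ring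
    · ring
  have hdn : ∀ b p, 0 ≤ aw i b t p - w p := fun b p => sub_nonneg.2 (hle b p)
  have hb1 : 0 ≤ 1 - β := IsPlan.nonneg t (hd true) (hdn true)
  rcases hb0.eq_or_lt with h0 | h0
  · refine ⟨fun o => aw i (o.getD false) t, fun o => ⟨aw_plan _ _ _, aw_nonneg _ _ _ ht⟩, ?_⟩
    intro b p
    simp [← h0]
  rcases hb1.eq_or_lt with h1 | h1
  · have hz : ∀ b p, aw i b t p = w p := by
      intro b p
      have hd' := hd b
      rw [← h1] at hd'
      have := IsPlan.zero t hd' (hdn b) (fun p hp => by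
        have e := aw_off i b t p hp
        have := hdn b p
        have := (hwb p).1
        linarith) p
      linarith
    have hβ1 : β = 1 := by linarith
    refine ⟨fun o => aw i (o.getD false) t, fun o => ⟨aw_plan _ _ _, aw_nonneg _ _ _ ht⟩, ?_⟩
    intro b p
    simp only [hz, hβ1]
    ring
  · refine ⟨fun o => match o with
      | none => fun p => β⁻¹ * w p
      | some b => fun p => (1 - β)⁻¹ * (aw i b t p - w p), ?_, ?_⟩
    · rintro (_ | b)
      · refine ⟨?_, fun p => mul_nonneg (inv_nonneg.2 hb0) (hwb p).1⟩
        have := hw.smul β⁻¹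
        rwa [inv_mul_cancel₀ h0.ne'] at this
      · refine ⟨?_, fun p => mul_nonneg (inv_nonneg.2 hb1) (hdn b p)⟩
        have := (hd b).smul (1 - β)⁻¹
        rwa [inv_mul_cancel₀ h1.ne'] at this
    · intro b p
      have := h1.ne'
      have := h0.ne'
      simp only
      field_simp
      ring

theorem gw_bound {k : ℕ} (t : RTree k) : ∀ (R : Fin k → List Bool → ℝ) (c : Fin k → ℝ),
    (∀ i, IsPlan i t (R i) (c i)) → (∀ i p, 0 ≤ R i p) → 0 ≤ gw t R ∧ gw t R ≤ ∏ i, c i := by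
  induction t with
  | leaf b =>
    intro R c h hR
    have e : ∏ i, R i [] = ∏ i, c i := Finset.prod_congr rfl fun i _ => h i
    have hn : 0 ≤ ∏ i, R i [] := Finset.prod_nonneg fun i _ => hR i []
    simp only [gw]
    split_ifs
    · exact ⟨hn, e.le⟩
    · exact ⟨le_rfl, e ▸ hn⟩
  | node j g t0 t1 ih0 ih1 =>
    intro R c h hR
    choose c0 c1 hc h0 h1 using h
    have b0 := ih0 _ c0 h0 (fun i p => hR i _)
    have b1 := ih1 _ c1 h1 (fun i p => hR i _)
    have e : ∏ i, c0 i + ∏ i, c1 i = ∏ i, c i := by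
      rw [← Finset.mul_prod_erase _ c0 (Finset.mem_univ j),
        ← Finset.mul_prod_erase _ c1 (Finset.mem_univ j),
        ← Finset.mul_prod_erase _ c (Finset.mem_univ j)]
      have e0 : ∏ i ∈ Finset.univ.erase j, c0 i = ∏ i ∈ Finset.univ.erase j, c i :=
        Finset.prod_congr rfl fun i hi => by
          have := hc i; rw [if_neg (Finset.ne_of_mem_erase hi)] at this; exact this.1
      have e1 : ∏ i ∈ Finset.univ.erase j, c1 i = ∏ i ∈ Finset.univ.erase j, c i :=
        Finset.prod_congr rfl fun i hi => by
          have := hc i; rw [if_neg (Finset.ne_of_mem_erase hi)] at this; exact this.2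
      have ej := hc j
      rw [if_pos rfl] at ej
      rw [e0, e1, ← ej]; ring
    simp only [gw]
    exact ⟨add_nonneg b0.1 b1.1, by rw [← e]; exact add_le_add b0.2 b1.2⟩

theorem gw_aw {k : ℕ} (x : Fin k → Bool) (t : RTree k) : ∀ A : Fin k → ℝ,
    gw t (fun i p => A i * aw i (x i) t p) = (∏ i, A i) * t.outProb x := by
  induction t with
  | leaf b => intro A; cases b <;> simp [gw, aw, outProb]
  | node j g t0 t1 ih0 ih1 =>
    intro A
    simp only [gw, aw, outProb, ← mul_assoc]
    rw [ih0, ih1]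
    simp only [Finset.prod_mul_distrib, Finset.prod_ite_eq', Finset.mem_univ, if_true]
    ring

theorem gw_sum {k : ℕ} (x : Fin k → Bool) (q r : Fin k → ℝ) (t : RTree k) :
    ∀ R : Fin k → Option Bool → List Bool → ℝ,
    ∑ S : Finset (Fin k), (∏ i ∈ S, q i) * (∏ i ∈ Sᶜ, r i) * gw t (fun i => R i (mask x S i)) =
      gw t (fun i p => q i * R i (some (x i)) p + r i * R i none p) := by
  induction t with
  | leaf b =>
    intro R
    cases b
    · simp [gw]
    · simp only [gw, if_true]
      rw [Finset.prod_add, Finset.powerset_univ]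
      refine Finset.sum_congr rfl fun S _ => ?_
      rw [← Finset.compl_eq_univ_sdiff, ← Finset.prod_mul_prod_compl S,
        Finset.prod_mul_distrib, Finset.prod_mul_distrib]
      have e0 : ∏ i ∈ S, R i (mask x S i) [] = ∏ i ∈ S, R i (some (x i)) [] :=
        Finset.prod_congr rfl fun i hi => by simp [mask, hi]
      have e1 : ∏ i ∈ Sᶜ, R i (mask x S i) [] = ∏ i ∈ Sᶜ, R i none [] :=
        Finset.prod_congr rfl fun i hi => by simp [mask, Finset.mem_compl.1 hi]
      rw [e0, e1]; ring
  | node j g t0 t1 ih0 ih1 =>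
    intro R
    simp only [gw, mul_add, Finset.sum_add_distrib]
    rw [← ih0 (fun i o p => R i o (false :: p)), ← ih1 (fun i o p => R i o (true :: p))]

end RTree

open RTree in
/-- If a randomized decision tree `T` computes `f` with error at most `δ` on every
input, then there is a sampling algorithm (a randomized guess `g` depending only on
the masked string, where coordinate `i` is kept independently with probability
`q_i = 1 - β_i(T)` and replaced by `⋆` with probability `β_i(T)`) which computes `f`
with error at most `δ` on every input. -/
theorem randomized_tree_to_sampling {k : ℕ} (δ : ℝ)
    (f : (Fin k → Bool) → Bool) (T : RTree k) (hT : T.Valid)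
    (herr : ∀ x : Fin k → Bool,
      (if f x = true then 1 - T.outProb x else T.outProb x) ≤ δ) :
    ∃ g : (Fin k → Option Bool) → ℝ, (∀ y, 0 ≤ g y ∧ g y ≤ 1) ∧
      ∀ x : Fin k → Bool,
        (if f x = true then
            1 - ∑ S : Finset (Fin k),
              (∏ i ∈ S, (1 - T.beta i)) * (∏ i ∈ Sᶜ, T.beta i) * g (mask x S)
          else
            ∑ S : Finset (Fin k),
              (∏ i ∈ S, (1 - T.beta i)) * (∏ i ∈ Sᶜ, T.beta i) * g (mask x S)) ≤ δ := by
  choose R hR hsum using fun i => exists_resp i T hT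
  refine ⟨fun y => gw T (fun i => R i (y i)), fun y => ?_, fun x => ?_⟩
  · have := gw_bound T (fun i => R i (y i)) (fun _ => 1) (fun i => (hR i _).1)
      (fun i => (hR i _).2)
    simpa using this
  · have key := gw_sum x (fun i => 1 - T.beta i) (fun i => T.beta i) T R
    simp only [hsum] at key
    have h2 := gw_aw x T (fun _ => 1)
    simp only [one_mul, Finset.prod_const_one] at h2
    rw [h2] at key
    simp only [key]
    exact herr x
end

section
/- Let T be a randomized decision tree on inputs from {0,1}^k. For a node v and coordinate i, let p_{v,i}(z) denote the product, over all nodes w labeled i on the root-to-v path, of the probability that the computation at w follows the edge toward v given x_i = z. Define β_{v,i} bottom-up by: for a leaf v, β_{v,i} = min{p_{v,i}(0), p_{v,i}(1)}; for an internal node v with children v_L, v_R at which coordinate j is queried, β_{v,i} = min{β_{v_L,i}, β_{v_R,i}} if i ≠ j, and β_{v,i} = β_{v_L,i} + β_{v_R,i} if i = j. Then for every i: (1) β_{root,i} = β_i(T), and (2) for every node v, β_{v,i} ≤ min{p_{v,i}(0), p_{v,i}(1)}. -/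
namespace RTree

/-- The subtree of `t` rooted at the node addressed by the path `π`
(`false` = left, `true` = right), if the path is valid. -/
def subtreeAt {k : ℕ} : RTree k → List Bool → Option (RTree k)
  | t, [] => some t
  | .leaf _, _ :: _ => none
  | .node _ _ t0 _, false :: p => subtreeAt t0 p
  | .node _ _ _ t1, true :: p => subtreeAt t1 p

/-- `pProd i z t π` is `p_{v,i}(z)`: the product, over all nodes labeled `i` on the
root-to-`v` path `π` in `t`, of the probability of following the edge toward `v`
given `x i = z`. -/
def pProd {k : ℕ} (i : Fin k) (z : Bool) : RTree k → List Bool → ℝ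
  | _, [] => 1
  | .leaf _, _ :: _ => 1
  | .node j g t0 _, false :: p => (if j = i then g z else 1) * pProd i z t0 p
  | .node j g _ t1, true :: p => (if j = i then 1 - g z else 1) * pProd i z t1 p

/-- The bottom-up computation of `β_{v,i}`, carried out relative to the accumulated
prefix products `a = p_{v,i}(0)` and `b = p_{v,i}(1)`: at a leaf the value is
`min a b`; at an internal node querying `j ≠ i` it is the minimum of the two
children's values; at an internal node querying `i` it is the sum of the two
children's values (with the accumulators updated by the edge probabilities). -/
def betaAcc {k : ℕ} (i : Fin k) : RTree k → ℝ → ℝ → ℝ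
  | .leaf _, a, b => min a b
  | .node j g t0 t1, a, b =>
      if j = i then
        betaAcc i t0 (a * g false) (b * g true) +
          betaAcc i t1 (a * (1 - g false)) (b * (1 - g true))
      else
        min (betaAcc i t0 a b) (betaAcc i t1 a b)

end RTree

namespace RTree

/-- Recursive form of the weighted overlap. -/
noncomputable def wov {k : ℕ} : RTree k → ℝ → ℝ → ℝ
  | .leaf _, a, b => min a b
  | .node _ g t0 t1, a, b =>
      wov t0 (a * g false) (b * g true) + wov t1 (a * (1 - g false)) (b * (1 - g true))

/-- Extension by zero along `cons c`. -/
def extCons (c : Bool) (F : List Bool → ℝ) : List Bool → ℝ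
  | [] => 0
  | d :: p => if d = c then F p else 0

theorem hasSum_extCons (c : Bool) (F : List Bool → ℝ) (s : ℝ) (h : HasSum F s) :
    HasSum (extCons c F) s := by
  have hinj : Function.Injective (fun p : List Bool => c :: p) := fun p q h => by simpa using h
  refine (hinj.hasSum_iff ?_).1 ?_
  · intro p hp
    cases p with
    | nil => rfl
    | cons d p =>
      have : d ≠ c := by
        rintro rfl
        exact hp ⟨p, rfl⟩
      simp [extCons, this]
  · have : extCons c F ∘ (fun p : List Bool => c :: p) = F := by
      funext p
      simp [extCons]
    rw [this]
    exact h

theorem hasSum_wov {k : ℕ} (t : RTree k) : ∀ a b : ℝ,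
    HasSum (fun p => min (a * t.leafDist (fun _ => false) p) (b * t.leafDist (fun _ => true) p))
      (wov t a b) := by
  induction t with
  | leaf c =>
    intro a b
    have := hasSum_ite_eq ([] : List Bool) (min a b)
    refine this.congr_fun ?_
    intro p
    by_cases hp : p = [] <;> simp [leafDist, hp]
  | node j g t0 t1 ih0 ih1 =>
    intro a b
    have h := (hasSum_extCons false _ _ (ih0 (a * g false) (b * g true))).add
      (hasSum_extCons true _ _ (ih1 (a * (1 - g false)) (b * (1 - g true))))
    refine h.congr_fun ?_
    intro p
    rcases p with _ | ⟨_ | _, p⟩ <;> simp [leafDist, extCons, mul_assoc]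

theorem ovl_eq_wov {k : ℕ} (t : RTree k) : ovl t = wov t 1 1 := by
  have := (hasSum_wov t 1 1).tsum_eq
  simpa [ovl] using this

theorem wov_zero {k : ℕ} (t : RTree k) : wov t 0 0 = 0 := by
  induction t with
  | leaf c => simp [wov]
  | node j g t0 t1 ih0 ih1 => simp [wov, ih0, ih1]

theorem betaAcc_le_min {k : ℕ} (i : Fin k) (t : RTree k) : ∀ a b : ℝ,
    betaAcc i t a b ≤ min a b := by
  induction t with
  | leaf c => intro a b; simp [betaAcc]
  | node j g t0 t1 ih0 ih1 =>
    intro a b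
    unfold betaAcc
    split_ifs with h
    · have h0 := le_min_iff.1 (ih0 (a * g false) (b * g true))
      have h1 := le_min_iff.1 (ih1 (a * (1 - g false)) (b * (1 - g true)))
      apply le_min <;> linarith [h0.1, h0.2, h1.1, h1.2]
    · exact (min_le_left _ _).trans (ih0 a b)

theorem betaAcc_le_wov {k : ℕ} (i : Fin k) (t : RTree k) : ∀ (t' : RTree k) (a b : ℝ),
    IsMod i t t' → betaAcc i t a b ≤ wov t' a b := by
  induction t with
  | leaf c =>
    intro t' a b h
    cases t' with
    | leaf c' => simp [betaAcc, wov]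
    | node j' g' s0 s1 => simp [IsMod] at h
  | node j g t0 t1 ih0 ih1 =>
    intro t' a b h
    cases t' with
    | leaf c' => simp [IsMod] at h
    | node j' g' s0 s1 =>
      obtain ⟨-, h0, h1, hg⟩ := h
      unfold betaAcc wov
      split_ifs at hg ⊢ with hj
      · subst hg
        exact add_le_add (ih0 _ _ _ h0) (ih1 _ _ _ h1)
      · rcases hg with rfl | rfl
        · simp only [mul_one, sub_self, mul_zero, wov_zero, add_zero]
          exact (min_le_left _ _).trans (ih0 _ _ _ h0)
        · simp only [mul_one, sub_zero, mul_zero, wov_zero, zero_add]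
          exact (min_le_right _ _).trans (ih1 _ _ _ h1)

theorem exists_mod {k : ℕ} (i : Fin k) (t : RTree k) : ∀ a b : ℝ,
    ∃ t', IsMod i t t' ∧ wov t' a b = betaAcc i t a b := by
  induction t with
  | leaf c => intro a b; exact ⟨.leaf c, by simp [IsMod], by simp [wov, betaAcc]⟩
  | node j g t0 t1 ih0 ih1 =>
    intro a b
    by_cases hj : j = i
    · obtain ⟨s0, m0, e0⟩ := ih0 (a * g false) (b * g true)
      obtain ⟨s1, m1, e1⟩ := ih1 (a * (1 - g false)) (b * (1 - g true))
      exact ⟨.node j g s0 s1, by simp [IsMod, m0, m1, hj], by simp [wov, betaAcc, hj, e0, e1]⟩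
    · obtain ⟨s0, m0, e0⟩ := ih0 a b
      obtain ⟨s1, m1, e1⟩ := ih1 a b
      rcases le_total (betaAcc i t0 a b) (betaAcc i t1 a b) with h | h
      · exact ⟨.node j (fun _ => 1) s0 s1, by simp [IsMod, m0, m1, hj],
          by simp [wov, betaAcc, hj, e0, wov_zero, h]⟩
      · exact ⟨.node j (fun _ => 0) s0 s1, by simp [IsMod, m0, m1, hj],
          by simp [wov, betaAcc, hj, e1, wov_zero, h]⟩

end RTree

open RTree in
/-- For every coordinate `i`: (1) the bottom-up value at the root equals the
uncertainty `β_i(T)`, and (2) for every node `v` of `T` (addressed by a path `π`),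
`β_{v,i} ≤ min (p_{v,i}(0)) (p_{v,i}(1))`. -/
theorem betaAcc_root_eq_beta_and_le_pProd {k : ℕ} (T : RTree k) (hT : T.Valid)
    (i : Fin k) :
    betaAcc i T 1 1 = T.beta i ∧
    ∀ (π : List Bool) (t : RTree k), subtreeAt T π = some t →
      betaAcc i t (pProd i false T π) (pProd i true T π) ≤
        min (pProd i false T π) (pProd i true T π) := by
  refine ⟨?_, fun π t _ => betaAcc_le_min i t _ _⟩
  symm
  apply IsLeast.csInf_eq
  constructor
  · obtain ⟨t', m, e⟩ := exists_mod i T 1 1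
    exact ⟨t', m, by rw [ovl_eq_wov, e]⟩
  · rintro v ⟨t', m, rfl⟩
    rw [ovl_eq_wov]
    exact betaAcc_le_wov i T t' 1 1 m
end

section
/- For every η > 0 there exists N₀ such that for all odd N = 2k + 1 ≥ N₀ the following holds. For b ∈ {0,1}, let D_b be the distribution on masked strings y ∈ {0,1,⋆}^N obtained by drawing X uniformly from the strings in {0,1}^N with exactly k + b ones and independently replacing each coordinate of X by ⋆ with probability N^(-1/5). Then the ℓ1 distance satisfies Σ_y |D_0(y) - D_1(y)| ≤ η. -/
/-- The number of ones in a boolean string. -/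
def wt {N : ℕ} (x : Fin N → Bool) : ℕ := (Finset.univ.filter fun i => x i = true).card

/-- The probability that masking `x` (independently replacing each coordinate by `⋆`
with probability `q` and keeping it with probability `1 - q`; `⋆` is modelled as
`none`) produces the masked string `y ∈ {0,1,⋆}^N`. -/
def maskProb {N : ℕ} (q : ℝ) (x : Fin N → Bool) (y : Fin N → Option Bool) : ℝ :=
  ∏ i : Fin N,
    match y i with
    | none => q
    | some c => if c = x i then 1 - q else 0

open Finset Polynomial in
/-- The fibre sum of mask probabilities, through a generating polynomial. -/
theorem fiber_sum {N : ℕ} (q : ℝ) (y : Fin N → Option Bool) (m : ℕ) :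
    ∑ x ∈ Finset.univ.filter (fun x : Fin N → Bool => wt x = m), maskProb q x y =
      q ^ (#{i | y i = none}) * (1 - q) ^ (#{i | y i = some true} + #{i | y i = some false}) *
        (if #{i | y i = some true} ≤ m then
          ((#{i | y i = none}).choose (m - #{i | y i = some true}) : ℝ) else 0) := by
  set s := #{i | y i = none} with hs
  set a := #{i | y i = some true} with ha
  set b := #{i | y i = some false} with hb
  have h1 : ∑ x : Fin N → Bool, C (maskProb q x y) * (X : ℝ[X]) ^ wt x =
      ∏ i : Fin N, ∑ c : Bool, (C (match y i with
        | none => q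
        | some c' => if c' = c then 1 - q else 0) * (X : ℝ[X]) ^ (if c = true then 1 else 0)) := by
    rw [Fintype.prod_sum]
    refine Finset.sum_congr rfl fun x _ => ?_
    rw [Finset.prod_mul_distrib, Finset.prod_pow_eq_pow_sum]
    congr 1
    · rw [maskProb, map_prod]
    · rw [wt, Finset.card_filter]
  have h2 : ∏ i : Fin N, ∑ c : Bool, (C (match y i with
        | none => q
        | some c' => if c' = c then 1 - q else 0) * (X : ℝ[X]) ^ (if c = true then 1 else 0)) =
      C (q ^ s * (1 - q) ^ (a + b)) * ((1 + X) ^ s * X ^ a) := by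
    have h3 : ∀ i, ∑ c : Bool, (C (match y i with
        | none => q
        | some c' => if c' = c then 1 - q else 0) * (X : ℝ[X]) ^ (if c = true then 1 else 0)) =
        ((C q * (1 + X)) ^ (if y i = none then 1 else 0)) *
        ((C (1 - q) * X) ^ (if y i = some true then 1 else 0)) *
        ((C (1 - q)) ^ (if y i = some false then 1 else 0)) := by
      intro i
      rcases y i with _ | _ | _ <;> simp <;> ring
    rw [Finset.prod_congr rfl fun i _ => h3 i, Finset.prod_mul_distrib, Finset.prod_mul_distrib,
      Finset.prod_pow_eq_pow_sum, Finset.prod_pow_eq_pow_sum, Finset.prod_pow_eq_pow_sum,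
      ← Finset.card_filter, ← Finset.card_filter, ← Finset.card_filter, ← hs, ← ha, ← hb]
    simp only [map_mul, map_pow, mul_pow]
    ring
  have h4 := congrArg (fun p => Polynomial.coeff p m) (h1.trans h2)
  simp only [finsetSum_coeff, coeff_C_mul, coeff_mul_X_pow',
    coeff_one_add_X_pow] at h4
  rw [← h4, Finset.sum_filter]
  refine Finset.sum_congr rfl fun x _ => ?_
  by_cases h : wt x = m
  · simp [h]
  · rw [if_neg h]
    split_ifs with h'
    · rw [coeff_C_of_ne_zero (by omega)]
    · rfl

open Finset in
theorem card_wt (N m : ℕ) :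
    ((Finset.univ.filter (fun x : Fin N → Bool => wt x = m)).card : ℝ) = N.choose m := by
  have h := fiber_sum (N := N) 1 (fun _ => none) m
  simpa [maskProb] using h

open Finset in
theorem count_add {N : ℕ} (y : Fin N → Option Bool) :
    #{i | y i = none} + #{i | y i = some true} + #{i | y i = some false} = N := by
  rw [Finset.card_filter, Finset.card_filter, Finset.card_filter, ← Finset.sum_add_distrib,
    ← Finset.sum_add_distrib]
  have : ∀ i, ((if y i = none then 1 else 0) + (if y i = some true then 1 else 0)) +
      (if y i = some false then 1 else 0) = 1 := by
    intro i
    rcases y i with _ | _ | _ <;> simp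
  simp [this]

/-- Second moments of centered linear statistics. -/
theorem second_moment {N : ℕ} (w : Fin N → Option Bool → ℝ) (u : Fin N → Option Bool → ℝ) (v : ℝ)
    (h1 : ∀ i, ∑ o, w i o = 1) (h0 : ∀ i, ∑ o, w i o * u i o = 0)
    (hv : ∀ i, ∑ o, w i o * u i o ^ 2 = v) :
    ∑ y : Fin N → Option Bool, (∏ i, w i (y i)) * (∑ i, u i (y i)) ^ 2 = N * v := by
  have key : ∀ i j : Fin N, ∑ y : Fin N → Option Bool, (∏ l, w l (y l)) * (u i (y i) * u j (y j)) =
      if i = j then v else 0 := by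
    intro i j
    have e : ∀ y : Fin N → Option Bool, (∏ l, w l (y l)) * (u i (y i) * u j (y j)) =
        ∏ l, (w l (y l) * ((if l = i then u l (y l) else 1) * (if l = j then u l (y l) else 1))) := by
      intro y
      rw [Finset.prod_mul_distrib, Finset.prod_mul_distrib]
      simp
    rw [Finset.sum_congr rfl fun y _ => e y]
    rw [← Fintype.prod_sum (fun l o => w l o *
      ((if l = i then u l o else 1) * (if l = j then u l o else 1)))]
    split_ifs with hij
    · subst hij
      rw [Finset.prod_eq_single i]
      · rw [← hv i]
        refine Finset.sum_congr rfl fun o _ => ?_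
        simp [sq]
      · intro l _ hl
        simp [hl, h1]
      · simp
    · apply Finset.prod_eq_zero (Finset.mem_univ i)
      rw [← h0 i]
      refine Finset.sum_congr rfl fun o _ => ?_
      simp [hij]
  have e2 : ∀ y : Fin N → Option Bool, (∏ i, w i (y i)) * (∑ i, u i (y i)) ^ 2 =
      ∑ i, ∑ j, (∏ l, w l (y l)) * (u i (y i) * u j (y j)) := by
    intro y
    rw [sq, Finset.sum_mul_sum, Finset.mul_sum]
    refine Finset.sum_congr rfl fun i _ => ?_
    rw [Finset.mul_sum]
  rw [Finset.sum_congr rfl fun y _ => e2 y, Finset.sum_comm]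
  have e3 : ∀ i : Fin N, ∑ y : Fin N → Option Bool, ∑ j, (∏ l, w l (y l)) * (u i (y i) * u j (y j))
      = v := by
    intro i
    rw [Finset.sum_comm]
    simp [key]
  simp [e3]

/-- Single coordinate masking weight. -/
def mw (q : ℝ) (c : Bool) (o : Option Bool) : ℝ :=
  match o with
  | none => q
  | some c' => if c' = c then 1 - q else 0

theorem maskProb_eq {N : ℕ} (q : ℝ) (x : Fin N → Bool) (y : Fin N → Option Bool) :
    maskProb q x y = ∏ i, mw q (x i) (y i) := rfl

theorem maskProb_nonneg {N : ℕ} {q : ℝ} (hq : 0 ≤ q) (hq1 : q ≤ 1) (x : Fin N → Bool)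
    (y : Fin N → Option Bool) : 0 ≤ maskProb q x y := by
  rw [maskProb_eq]
  refine Finset.prod_nonneg fun i _ => ?_
  unfold mw
  split
  · exact hq
  · split_ifs
    · linarith
    · exact le_rfl

theorem maskProb_sum {N : ℕ} (q : ℝ) (x : Fin N → Bool) :
    ∑ y, maskProb q x y = 1 := by
  simp only [maskProb_eq]
  rw [← Fintype.prod_sum (fun i o => mw q (x i) o)]
  refine Finset.prod_eq_one fun i _ => ?_
  rcases x i <;> simp [mw]

theorem maskProb_moment {N : ℕ} (q : ℝ) (x : Fin N → Bool) (t : Fin N → ℝ)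
    (ht : ∀ i, t i ^ 2 = 1) :
    ∑ y, maskProb q x y * (∑ i, t i * ((if y i = none then 1 else 0) - q)) ^ 2
      = N * (q * (1 - q)) := by
  simp only [maskProb_eq]
  refine second_moment (fun i o => mw q (x i) o)
    (fun i o => t i * ((if o = none then 1 else 0) - q)) _ ?_ ?_ ?_
  · intro i
    rcases x i <;> simp [mw]
  · intro i
    rcases x i <;> simp [mw] <;> ring
  · intro i
    simp only [mul_pow, ht]
    rcases x i <;> simp [mw] <;> ring

open Finset in
/-- The number of visible zeros minus the number of visible ones. -/
theorem diff_eq {N : ℕ} (q : ℝ) (x : Fin N → Bool) (y : Fin N → Option Bool)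
    (h : maskProb q x y ≠ 0) :
    ((#{i | y i = some false} : ℝ) - #{i | y i = some true}) =
      (1 - q) * ((N : ℝ) - 2 * wt x) -
        ∑ i, (if x i = true then -1 else 1) * ((if y i = none then 1 else 0) - q) := by
  have hN : (N : ℝ) - 2 * wt x = ∑ i, (if x i = true then (-1 : ℝ) else 1) := by
    have : ∀ i, (if x i = true then (-1 : ℝ) else 1) = 1 - 2 * (if x i = true then 1 else 0) := by
      intro i
      split_ifs <;> norm_num
    simp only [this, Finset.sum_sub_distrib, ← Finset.mul_sum, wt, Finset.card_filter]
    simp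
  rw [hN, Finset.mul_sum, ← Finset.sum_sub_distrib, Finset.card_filter, Finset.card_filter]
  push_cast
  rw [← Finset.sum_sub_distrib]
  refine Finset.sum_congr rfl fun i _ => ?_
  rw [maskProb_eq, Finset.prod_ne_zero_iff] at h
  have hi := h i (Finset.mem_univ i)
  revert hi
  rcases x i <;> rcases y i with _ | _ | _ <;> simp [mw]

open Finset in
/-- The test function bounding the relative difference. -/
noncomputable def tf {N : ℕ} (ε m : ℝ) (y : Fin N → Option Bool) : ℝ :=
  ε + ((#{i | y i = some false} : ℝ) - #{i | y i = some true}) ^ 2 / (ε * m ^ 2) +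
    4 * ((#{i | y i = none} : ℝ) - m) ^ 2 / m ^ 2

open Finset in
theorem tf_expect {N : ℕ} (q ε : ℝ) (hq : 0 < q) (hq1 : q ≤ 1) (hε : 0 < ε) (x : Fin N → Bool)
    (hx : ((N : ℝ) - 2 * wt x) ^ 2 = 1) (hm : 0 < N * q) :
    ∑ y, maskProb q x y * tf ε (N * q) y ≤
      ε + (2 + 2 * (N * q)) / (ε * (N * q) ^ 2) + 4 / (N * q) := by
  set m := N * q with hmdef
  have hA := maskProb_moment q x (fun i => if x i = true then -1 else 1)
    (by intro i; split_ifs <;> norm_num)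
  have hB := maskProb_moment q x (fun i => 1) (by intro i; norm_num)
  have hS := maskProb_sum q x
  set Z : (Fin N → Option Bool) → ℝ := fun y =>
    ∑ i, (if x i = true then -1 else 1) * ((if y i = none then 1 else 0) - q) with hZ
  have hle : ∀ y, maskProb q x y * tf ε m y ≤
      maskProb q x y * (ε + 2 / (ε * m ^ 2)) + (maskProb q x y * (Z y) ^ 2) * (2 / (ε * m ^ 2)) +
      (maskProb q x y * (∑ i, 1 * ((if y i = none then 1 else 0) - q)) ^ 2) * (4 / m ^ 2) := by
    intro y
    by_cases h : maskProb q x y = 0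
    · simp [h]
    have hd := diff_eq q x y h
    have hs : ((#{i | y i = none} : ℝ) - m) = ∑ i, 1 * ((if y i = none then 1 else 0) - q) := by
      simp [hmdef]
    have hp := maskProb_nonneg hq.le hq1 x y
    have : tf ε m y ≤ (ε + 2 / (ε * m ^ 2)) + (Z y) ^ 2 * (2 / (ε * m ^ 2)) +
        (∑ i, 1 * ((if y i = none then 1 else 0) - q)) ^ 2 * (4 / m ^ 2) := by
      rw [tf, hd, hs]
      have h1 : ((1 - q) * ((N : ℝ) - 2 * wt x) - Z y) ^ 2 ≤ 2 + 2 * (Z y) ^ 2 := by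
        have : ((1 - q) * ((N : ℝ) - 2 * wt x)) ^ 2 ≤ 1 := by
          rw [mul_pow, hx]; nlinarith
        nlinarith [sq_nonneg ((1 - q) * ((N : ℝ) - 2 * wt x) + Z y)]
      have h2 : ((1 - q) * ((N : ℝ) - 2 * wt x) - Z y) ^ 2 / (ε * m ^ 2) ≤
          (2 + 2 * (Z y) ^ 2) / (ε * m ^ 2) := by gcongr
      have h3 : (2 + 2 * (Z y) ^ 2) / (ε * m ^ 2) =
        2 / (ε * m ^ 2) + (Z y) ^ 2 * (2 / (ε * m ^ 2)) := by ring
      rw [h3] at h2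
      have h4 : ∀ r : ℝ, 4 * r / m ^ 2 = r * (4 / m ^ 2) := by intro r; ring
      rw [h4]
      linarith
    calc _ ≤ maskProb q x y * _ := mul_le_mul_of_nonneg_left this hp
      _ = _ := by ring
  refine (Finset.sum_le_sum fun y _ => hle y).trans ?_
  rw [Finset.sum_add_distrib, Finset.sum_add_distrib, ← Finset.sum_mul, ← Finset.sum_mul,
    ← Finset.sum_mul, hS, hA, hB]
  have hv : N * (q * (1 - q)) ≤ m := by
    rw [hmdef]
    nlinarith
  have h5 : N * (q * (1 - q)) * (2 / (ε * m ^ 2)) ≤ m * (2 / (ε * m ^ 2)) := by gcongr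
  have h6 : N * (q * (1 - q)) * (4 / m ^ 2) ≤ m * (4 / m ^ 2) := by gcongr
  have h7 : m * (4 / m ^ 2) = 4 / m := by field_simp
  have h8 : (2 + 2 * m) / (ε * m ^ 2) = 2 / (ε * m ^ 2) + m * (2 / (ε * m ^ 2)) := by ring
  rw [h8]
  linarith

/-- The exact relation between adjacent binomial coefficients. -/
theorem choose_rel (s a k : ℕ) :
    ((s : ℝ) + 1) * ((if a ≤ k then (s.choose (k - a) : ℝ) else 0) -
      (if a ≤ k + 1 then (s.choose (k + 1 - a) : ℝ) else 0)) =
    ((if a ≤ k then (s.choose (k - a) : ℝ) else 0) +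
      (if a ≤ k + 1 then (s.choose (k + 1 - a) : ℝ) else 0)) * (2 * ((k : ℝ) - a) + 1 - s) := by
  rcases le_or_gt a k with h | h
  · obtain ⟨j, rfl⟩ := Nat.exists_eq_add_of_le h
    have e1 : a + j - a = j := by omega
    have e2 : a + j + 1 - a = j + 1 := by omega
    rw [if_pos h, if_pos (by omega), e1, e2]
    have := Nat.choose_succ_right_eq s j
    have h3 : (s.choose (j + 1) : ℝ) * (j + 1) = s.choose j * ((s : ℝ) - j) := by
      rcases le_or_gt j s with hj | hj
      · rw [← Nat.cast_sub hj]; exact_mod_cast this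
      · rw [Nat.choose_eq_zero_of_lt hj, Nat.choose_eq_zero_of_lt (by omega)]; simp
    push_cast
    linear_combination (-2) * h3
  · rw [if_neg (by omega)]
    rcases Nat.lt_or_ge (k + 1) a with h2 | h2
    · rw [if_neg (by omega)]; simp
    · obtain rfl : a = k + 1 := by omega
      simp
      ring

open Finset in
theorem pointwise {N k : ℕ} (hN : N = 2 * k + 1) (q ε m : ℝ) (hq : 0 < q) (hq1 : q ≤ 1)
    (hε : 0 < ε) (hm : 0 < m) (y : Fin N → Option Bool) :
    |(∑ x ∈ Finset.univ.filter (fun x : Fin N → Bool => wt x = k), maskProb q x y) -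
      (∑ x ∈ Finset.univ.filter (fun x : Fin N → Bool => wt x = k + 1), maskProb q x y)| ≤
    ((∑ x ∈ Finset.univ.filter (fun x : Fin N → Bool => wt x = k), maskProb q x y) +
      (∑ x ∈ Finset.univ.filter (fun x : Fin N → Bool => wt x = k + 1), maskProb q x y)) *
      tf ε m y := by
  have rel := choose_rel (#{i | y i = none}) (#{i | y i = some true}) k
  have e0 := fiber_sum q y k
  have e1 := fiber_sum q y (k + 1)
  have p0 : 0 ≤ ∑ x ∈ Finset.univ.filter (fun x : Fin N → Bool => wt x = k), maskProb q x y :=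
    Finset.sum_nonneg fun x _ => maskProb_nonneg hq.le hq1 x y
  have p1 : 0 ≤ ∑ x ∈ Finset.univ.filter (fun x : Fin N → Bool => wt x = k + 1), maskProb q x y :=
    Finset.sum_nonneg fun x _ => maskProb_nonneg hq.le hq1 x y
  set A := ∑ x ∈ Finset.univ.filter (fun x : Fin N → Bool => wt x = k), maskProb q x y
  set B := ∑ x ∈ Finset.univ.filter (fun x : Fin N → Bool => wt x = k + 1), maskProb q x y
  have hc := count_add y
  rw [tf]
  set s := #{i | y i = none}
  set a := #{i | y i = some true}
  set b := #{i | y i = some false}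
  have hcr : (s : ℝ) + a + b = 2 * k + 1 := by
    have : s + a + b = 2 * k + 1 := by omega
    exact_mod_cast this
  have hd : 2 * ((k : ℝ) - a) + 1 - s = b - a := by linarith
  rw [hd] at rel
  have hrel : ((s : ℝ) + 1) * (A - B) = (A + B) * (b - a) := by
    rw [e0, e1]
    linear_combination (q ^ s * (1 - q) ^ (a + b)) * rel
  set d : ℝ := b - a
  have hs0 : (0 : ℝ) ≤ s := Nat.cast_nonneg s
  have hW : 0 ≤ A + B := add_nonneg p0 p1
  have t1 : 0 ≤ d ^ 2 / (ε * m ^ 2) := by positivity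
  have t2 : 0 ≤ 4 * ((s : ℝ) - m) ^ 2 / m ^ 2 := by positivity
  rcases le_or_gt (m / 2) (s : ℝ) with h | h
  · have habs : ((s : ℝ) + 1) * |A - B| = (A + B) * |d| := by
      rw [← abs_of_nonneg hW, ← abs_mul, ← hrel, abs_mul, abs_of_pos (by linarith : (0 : ℝ) < s + 1)]
    have h1 : (m / 2) * |A - B| ≤ (A + B) * |d| := by
      rw [← habs]
      exact mul_le_mul_of_nonneg_right (by linarith) (abs_nonneg _)
    have h2 : |A - B| ≤ (A + B) * (2 * |d| / m) := by
      rw [← mul_div_assoc, le_div_iff₀ hm]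
      linarith
    refine h2.trans (mul_le_mul_of_nonneg_left ?_ hW)
    have h3 : 2 * |d| / m ≤ ε + d ^ 2 / (ε * m ^ 2) := by
      have : ε + d ^ 2 / (ε * m ^ 2) - 2 * |d| / m = (ε * m - |d|) ^ 2 / (ε * m ^ 2) := by
        rw [← sq_abs d]
        field_simp
        ring
      have : 0 ≤ (ε * m - |d|) ^ 2 / (ε * m ^ 2) := by positivity
      linarith
    linarith
  · have h1 : |A - B| ≤ A + B := by
      rw [abs_le]; constructor <;> linarith
    have h2 : 1 ≤ 4 * ((s : ℝ) - m) ^ 2 / m ^ 2 := by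
      rw [le_div_iff₀ (by positivity)]
      nlinarith
    calc |A - B| ≤ (A + B) * 1 := by linarith
      _ ≤ _ := mul_le_mul_of_nonneg_left (by linarith) hW

theorem l1_bound {N k : ℕ} (hN : N = 2 * k + 1) (q ε : ℝ) (hq : 0 < q) (hq1 : q ≤ 1)
    (hε : 0 < ε) :
    ∑ y : Fin N → Option Bool,
        |(∑ x ∈ Finset.univ.filter fun x : Fin N → Bool => wt x = k,
              maskProb q x y) / (N.choose k : ℝ) -
          (∑ x ∈ Finset.univ.filter fun x : Fin N → Bool => wt x = k + 1,
              maskProb q x y) / (N.choose (k + 1) : ℝ)| ≤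
      2 * (ε + (2 + 2 * (N * q)) / (ε * (N * q) ^ 2) + 4 / (N * q)) := by
  have hm : 0 < N * q := by
    have : (0 : ℝ) < N := by rw [hN]; positivity
    positivity
  set K := ε + (2 + 2 * (N * q)) / (ε * (N * q) ^ 2) + 4 / (N * q) with hK
  have hch : N.choose (k + 1) = N.choose k := by
    rw [hN]; exact Nat.choose_symm_half k
  have hpos : (0 : ℝ) < N.choose k := by
    exact_mod_cast Nat.choose_pos (by omega)
  have hb : ∀ j : ℕ, ((N : ℝ) - 2 * j) ^ 2 = 1 → N.choose j = N.choose k →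
      ∑ y, (∑ x ∈ Finset.univ.filter (fun x : Fin N → Bool => wt x = j), maskProb q x y) *
        tf ε (N * q) y ≤ N.choose k * K := by
    intro j hj hjk
    simp only [Finset.sum_mul]
    rw [Finset.sum_comm]
    rw [← hjk, ← card_wt]
    refine (Finset.sum_le_card_nsmul _ _ K fun x hx => ?_).trans (nsmul_eq_mul _ _).le
    have hw : wt x = j := by simpa using hx
    exact tf_expect q ε hq hq1 hε x (by rw [hw]; exact hj) hm
  have b0 := hb k (by rw [hN]; push_cast; ring) rfl
  have b1 := hb (k + 1) (by rw [hN]; push_cast; ring) hch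
  rw [hch]
  calc _ ≤ ∑ y : Fin N → Option Bool,
        ((∑ x ∈ Finset.univ.filter (fun x : Fin N → Bool => wt x = k), maskProb q x y) *
          tf ε (N * q) y +
        (∑ x ∈ Finset.univ.filter (fun x : Fin N → Bool => wt x = k + 1), maskProb q x y) *
          tf ε (N * q) y) / (N.choose k : ℝ) := by
        refine Finset.sum_le_sum fun y _ => ?_
        rw [← sub_div, abs_div, abs_of_pos hpos, ← add_mul]
        exact div_le_div_of_nonneg_right (pointwise hN q ε _ hq hq1 hε hm y) hpos.le
    _ ≤ _ := by
        rw [← Finset.sum_div, Finset.sum_add_distrib, div_le_iff₀ hpos]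
        linarith

/-- For every `η > 0` there is `N₀` such that for all odd `N = 2k + 1 ≥ N₀`:
if `D_b` (for `b ∈ {0,1}`) is the distribution on masked strings `y ∈ {0,1,⋆}^N`
obtained by drawing `X` uniformly from the strings with exactly `k + b` ones and
independently replacing each coordinate by `⋆` with probability `N^(-1/5)`, then
`∑_y |D_0(y) - D_1(y)| ≤ η`. -/
theorem l1_distance_masked_weights_small :
    ∀ η : ℝ, 0 < η → ∃ N₀ : ℕ, ∀ N k : ℕ, N = 2 * k + 1 → N₀ ≤ N →
      ∑ y : Fin N → Option Bool,
        |(∑ x ∈ Finset.univ.filter fun x : Fin N → Bool => wt x = k,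
              maskProb ((N : ℝ) ^ (-(1 / 5) : ℝ)) x y) / (N.choose k : ℝ) -
          (∑ x ∈ Finset.univ.filter fun x : Fin N → Bool => wt x = k + 1,
              maskProb ((N : ℝ) ^ (-(1 / 5) : ℝ)) x y) / (N.choose (k + 1) : ℝ)| ≤
        η := by
  intro η hη
  have hε : 0 < η / 8 := by positivity
  have ht : Filter.Tendsto (fun N : ℕ => (N : ℝ) ^ (4 / 5 : ℝ)) Filter.atTop Filter.atTop :=
    (tendsto_rpow_atTop (by norm_num)).comp tendsto_natCast_atTop_atTop
  obtain ⟨N₀, hN₀⟩ := Filter.eventually_atTop.1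
    (ht.eventually_ge_atTop (1 + (4 / (η / 8) + 4) / (η / 8)))
  refine ⟨N₀, fun N k hN hle => ?_⟩
  have hbig := hN₀ N hle
  have hNpos : (0 : ℝ) < N := by rw [hN]; positivity
  have hN1 : (1 : ℝ) ≤ N := by
    have : 1 ≤ N := by omega
    exact_mod_cast this
  have hq : 0 < (N : ℝ) ^ (-(1 / 5) : ℝ) := Real.rpow_pos_of_pos hNpos _
  have hq1 : (N : ℝ) ^ (-(1 / 5) : ℝ) ≤ 1 := Real.rpow_le_one_of_one_le_of_nonpos hN1 (by norm_num)
  refine (l1_bound hN _ (η / 8) hq hq1 hε).trans ?_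
  have hm : (N : ℝ) * (N : ℝ) ^ (-(1 / 5) : ℝ) = (N : ℝ) ^ (4 / 5 : ℝ) := by
    nth_rewrite 1 [← Real.rpow_one (N : ℝ)]
    rw [← Real.rpow_add hNpos]
    norm_num
  rw [hm]
  set m := (N : ℝ) ^ (4 / 5 : ℝ)
  set ε := η / 8 with hεd
  have hpos : 0 < (4 / ε + 4) / ε := by positivity
  have hm1 : 1 ≤ m := by linarith
  have hm0 : 0 < m := by linarith
  have h1 : (2 + 2 * m) / (ε * m ^ 2) ≤ (4 / ε) / m := by
    rw [div_div, div_le_div_iff₀ (by positivity) (by positivity)]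
    have : 0 ≤ ε * m * (m - 1) := mul_nonneg (by positivity) (by linarith)
    nlinarith
  have h2 : (4 / ε + 4) / m ≤ ε := by
    rw [div_le_iff₀ hm0]
    have : (4 / ε + 4) / ε ≤ m := by linarith
    rw [div_le_iff₀ hε] at this
    linarith
  rw [add_div] at h2
  have : η = 8 * ε := by rw [hεd]; ring
  linarith
end
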